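/- Let D be a non-dictatorial, unidimensional domain. There exists no invariant, tops-only and strategy-proof rule f : D^2 → A if and only if D is a semi-hybrid domain satisfying the unique seconds property. -/

import Mathlib

open Classical

/-- A strict preference over `A`, represented as a ranking bijection:
`P k` is the `(k+1)`-th ranked alternative. -/
abbrev Pref (A : Type*) [Fintype A] := Fin (Fintype.card A) ≃ A

variable {A : Type*} [Fintype A] [DecidableEq A] [Nonempty A]

/-- `rk P k` : the `(k+1)`-th ranked alternative of `P` (0-indexed, so `rk P 0 = r₁(P)`). -/
noncomputable def rk (P : Pref A) (k : ℕ) : A :=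
  if h : k < Fintype.card A then P ⟨k, h⟩ else Classical.arbitrary A

/-- The peak `r₁(P)`. -/
noncomputable def peak (P : Pref A) : A := rk P 0

/-- The second-ranked alternative `r₂(P)`. -/
noncomputable def second (P : Pref A) : A := rk P 1

/-- `a` is strictly preferred to `b` under `P`. -/
def prefers (P : Pref A) (a b : A) : Prop := P.symm a < P.symm b

/-- Two preferences are completely reversed. -/
def Reversed (P P' : Pref A) : Prop := ∀ a b : A, prefers P a b ↔ prefers P' b a

/-- A profile lies in the domain `D`. -/
def InDom (D : Set (Pref A)) {n : ℕ} (P : Fin n → Pref A) : Prop := ∀ i, P i ∈ D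

/-- Unanimity (an SCF satisfying it is called a rule). -/
def IsRule (D : Set (Pref A)) {n : ℕ} (f : (Fin n → Pref A) → A) : Prop :=
  ∀ P : Fin n → Pref A, InDom D P → ∀ a : A, (∀ i, peak (P i) = a) → f P = a

/-- Strategy-proofness (relative to the domain `D`). -/
def StrategyProof (D : Set (Pref A)) {n : ℕ} (f : (Fin n → Pref A) → A) : Prop :=
  ∀ P : Fin n → Pref A, InDom D P → ∀ i : Fin n, ∀ Q ∈ D,
    f P = f (Function.update P i Q) ∨ prefers (P i) (f P) (f (Function.update P i Q))

/-- The tops-only property. -/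
def TopsOnly (D : Set (Pref A)) {n : ℕ} (f : (Fin n → Pref A) → A) : Prop :=
  ∀ P P' : Fin n → Pref A, InDom D P → InDom D P' →
    (∀ i, peak (P i) = peak (P' i)) → f P = f P'

/-- Anonymity. -/
def Anonymous (D : Set (Pref A)) {n : ℕ} (f : (Fin n → Pref A) → A) : Prop :=
  ∀ P : Fin n → Pref A, InDom D P → ∀ σ : Equiv.Perm (Fin n), f (P ∘ σ) = f P

/-- `f` behaves like a dictatorship on `B`. -/
def DictatorOn (D : Set (Pref A)) {n : ℕ} (f : (Fin n → Pref A) → A) (B : Set A) : Prop :=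
  ∃ i : Fin n, ∀ P : Fin n → Pref A, InDom D P → (∀ j, peak (P j) ∈ B) → f P = peak (P i)

/-- `f` is a dictatorship. -/
def Dictatorship (D : Set (Pref A)) {n : ℕ} (f : (Fin n → Pref A) → A) : Prop :=
  DictatorOn D f Set.univ

/-- A dictatorial domain. -/
def DictatorialDomain (D : Set (Pref A)) : Prop :=
  ∀ n : ℕ, 2 ≤ n → ∀ f : (Fin n → Pref A) → A,
    IsRule D f → StrategyProof D f → Dictatorship D f

/-- A tops-only domain. -/
def TopsOnlyDomain (D : Set (Pref A)) : Prop :=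
  ∀ n : ℕ, 2 ≤ n → ∀ f : (Fin n → Pref A) → A,
    IsRule D f → StrategyProof D f → TopsOnly D f

/-- Adjacency of two alternatives relative to the domain `D`. -/
def DomAdjacent (D : Set (Pref A)) (a b : A) : Prop :=
  ∃ P ∈ D, ∃ P' ∈ D, peak P = a ∧ second P = b ∧ peak P' = b ∧ second P' = a ∧
    ∀ k : ℕ, 2 ≤ k → rk P k = rk P' k

/-- The adjacency graph `G_∼` of the domain `D`. -/
noncomputable def adjGraph (D : Set (Pref A)) : SimpleGraph A :=
  SimpleGraph.fromRel (DomAdjacent D)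

/-- Path-connectedness of the domain. -/
def PathConnectedDom (D : Set (Pref A)) : Prop := (adjGraph D).Connected

/-- Diversity: the domain contains two completely reversed preferences. -/
def Diversity (D : Set (Pref A)) : Prop := ∃ P ∈ D, ∃ P' ∈ D, Reversed P P'

/-- `S(D^a)`: the set of alternatives second-ranked in some preference of `D` with peak `a`. -/
def secondsSet (D : Set (Pref A)) (a : A) : Set A := {b | ∃ P ∈ D, peak P = a ∧ second P = b}

/-- Leaf symmetry. -/
def LeafSymmetry (D : Set (Pref A)) : Prop :=
  ∀ x : A, (∃! y, (adjGraph D).Adj x y) →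
    (∃ u ∈ secondsSet D x, ∃ v ∈ secondsSet D x, u ≠ v) →
    ∃ z ∈ secondsSet D x, ¬ (adjGraph D).Adj x z ∧ x ∈ secondsSet D z

/-- Unidimensionality: path-connectedness, diversity and leaf symmetry. -/
def Unidimensional (D : Set (Pref A)) : Prop :=
  PathConnectedDom D ∧ Diversity D ∧ LeafSymmetry D

/-- The unique seconds property. -/
def UniqueSeconds (D : Set (Pref A)) : Prop := ∃ x b : A, secondsSet D x = {b}

/-- Minimal richness. -/
def MinimallyRich (D : Set (Pref A)) : Prop := ∀ a : A, ∃ P ∈ D, peak P = a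

/-- The vertex set `⟨x, y|T⟩` of the (in a tree, unique) shortest path between `x` and `y`. -/
def intv (T : SimpleGraph A) (x y : A) : Set A :=
  {z | T.dist x z + T.dist z y = T.dist x y}

/-- `a'` is the projection of `a` onto `B` in `T`. -/
def IsProjPt (T : SimpleGraph A) (B : Set A) (a a' : A) : Prop :=
  a' ∈ B ∧ ∀ b ∈ B, a' ∈ intv T a b

/-- The projection `Proj(a, B)` of `a` onto a path-closed set `B` in the tree `T`. -/
noncomputable def projOn (T : SimpleGraph A) (B : Set A) (a : A) : A :=
  if h : ∃ a', IsProjPt T B a a' then h.choose else a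

/-- `Γ(P)`: the vertex set of the minimal subtree of `T` spanning all the peaks. -/
def gammaSet (T : SimpleGraph A) {n : ℕ} (P : Fin n → Pref A) : Set A :=
  {c | ∃ i j : Fin n, c ∈ intv T (peak (P i)) (peak (P j))}

/-- The projection rule on `T` w.r.t. `xbar`. -/
noncomputable def projRule (T : SimpleGraph A) (xbar : A) {n : ℕ}
    (P : Fin n → Pref A) : A :=
  projOn T (gammaSet T P) xbar

/-- Single-peakedness on a tree. -/
def SinglePeaked (T : SimpleGraph A) (P : Pref A) : Prop :=
  ∀ c d : A, c ≠ d → c ∈ intv T (peak P) d → prefers P c d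

/-- Semi-single-peakedness on `T` w.r.t. the threshold `xbar`. -/
def SemiSP (T : SimpleGraph A) (xbar : A) (P : Pref A) : Prop :=
  (∀ c d : A, c ∈ intv T (peak P) xbar → d ∈ intv T (peak P) xbar → c ≠ d →
    c ∈ intv T (peak P) d → prefers P c d) ∧
  (∀ c : A, c ∉ intv T (peak P) xbar →
    prefers P (projOn T (intv T (peak P) xbar) c) c)

/-- A semi-single-peaked domain. -/
def SemiSPDomain (D : Set (Pref A)) : Prop :=
  ∃ (T : SimpleGraph A) (xbar : A), T.IsTree ∧
    D ⊆ {P | SemiSP T xbar P} ∧ (adjGraph D).Connected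

/-- `A^{a⇀b}`: the alternatives whose path to `b` goes through `a`. -/
def sideSet (T : SimpleGraph A) (a b : A) : Set A := {z | a ∈ intv T z b}

/-- `x = max^P(B)`: `x` is `P`'s best alternative of `B`. -/
def IsBestOf (P : Pref A) (x : A) (B : Set A) : Prop :=
  x ∈ B ∧ ∀ y ∈ B, y ≠ x → prefers P x y

/-- `a` and `b` are dual-thresholds in the tree `T`. -/
def DualThresholds (T : SimpleGraph A) (a b : A) : Prop :=
  a ≠ b ∧ ∀ c : A, c ∉ intv T a b →
    projOn T (intv T a b) c = a ∨ projOn T (intv T a b) c = b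

/-- An `(a,b)`-semi-hybrid preference on `T`. -/
def SemiHybridPref (T : SimpleGraph A) (a b : A) (P : Pref A) : Prop :=
  (peak P ∈ sideSet T a b \ {a} → SemiSP T a P ∧ IsBestOf P b (sideSet T b a)) ∧
  (peak P ∈ sideSet T b a \ {b} → SemiSP T b P ∧ IsBestOf P a (sideSet T a b)) ∧
  (peak P ∈ intv T a b → IsBestOf P a (sideSet T a b) ∧ IsBestOf P b (sideSet T b a))

/-- `x` is a leaf of the subgraph of `G` induced on `B`. -/
def IsLeafOn (G : SimpleGraph A) (B : Set A) (x : A) : Prop :=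
  x ∈ B ∧ ∃! y, y ∈ B ∧ G.Adj x y

/-- `D` is an `(a,b)`-semi-hybrid domain on the tree `T`. -/
def SemiHybridDomainOn (D : Set (Pref A)) (T : SimpleGraph A) (a b : A) : Prop :=
  T.IsTree ∧ DualThresholds T a b ∧ D ⊆ {P | SemiHybridPref T a b P} ∧
  (adjGraph D).Connected ∧
  (¬ ∃ (T' : SimpleGraph A) (a' b' : A), T'.IsTree ∧ DualThresholds T' a' b' ∧
      D ⊆ {P | SemiHybridPref T' a' b' P} ∧ intv T' a' b' ⊂ intv T a b) ∧
  ((adjGraph D).IsTree →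
    ∀ x : A, IsLeafOn (adjGraph D) (intv T a b) x →
      ∃ P ∈ D, ¬ SemiSP (adjGraph D) x P)

/-- `D` is a semi-hybrid domain. -/
def SemiHybridDomain (D : Set (Pref A)) : Prop :=
  ∃ (T : SimpleGraph A) (a b : A), SemiHybridDomainOn D T a b

/-- An `(a,b)`-hybrid preference on `T`. -/
def HybridPref (T : SimpleGraph A) (a b : A) (P : Pref A) : Prop :=
  (∀ y z : A, ((y ∈ sideSet T a b ∧ z ∈ sideSet T a b) ∨
      (y ∈ sideSet T b a ∧ z ∈ sideSet T b a)) → y ≠ z →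
    y ∈ intv T (peak P) z → prefers P y z) ∧
  (peak P ∈ sideSet T a b \ {a} → IsBestOf P a (intv T a b)) ∧
  (peak P ∈ sideSet T b a \ {b} → IsBestOf P b (intv T a b))

/-- `D` is an `(a,b)`-hybrid domain on the tree `T`. -/
def HybridDomainOn (D : Set (Pref A)) (T : SimpleGraph A) (a b : A) : Prop :=
  T.IsTree ∧ DualThresholds T a b ∧ D ⊆ {P | HybridPref T a b P} ∧
  (adjGraph D).Connected ∧
  (¬ ∃ (T' : SimpleGraph A) (a' b' : A), T'.IsTree ∧ DualThresholds T' a' b' ∧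
      D ⊆ {P | HybridPref T' a' b' P} ∧ intv T' a' b' ⊂ intv T a b) ∧
  3 ≤ (intv T a b).ncard

/-- `f` is an `(a,b)`-hybrid rule on the tree `T`. -/
def IsHybridRule (D : Set (Pref A)) {n : ℕ} (f : (Fin n → Pref A) → A)
    (T : SimpleGraph A) (a b : A) : Prop :=
  T.IsTree ∧ DualThresholds T a b ∧ 3 ≤ (intv T a b).ncard ∧
  ∃ i : Fin n, ∀ P : Fin n → Pref A, InDom D P →
    (peak (P i) ∈ intv T a b → f P = peak (P i)) ∧
    (peak (P i) ∈ sideSet T a b \ {a} → f P = projOn T (gammaSet T P) a) ∧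
    (peak (P i) ∈ sideSet T b a \ {b} → f P = projOn T (gammaSet T P) b)

/-- The PNT rule on `T` w.r.t. the edge `(x, y)`, with the two distinguished voters `i, j`. -/
noncomputable def pntRule (T : SimpleGraph A) (x y : A) {n : ℕ} (i j : Fin n)
    (P : Fin n → Pref A) : A :=
  if peak (P i) ∈ sideSet T y x then peak (P i)
  else if peak (P j) ∈ sideSet T x y then projOn T (gammaSet T P) x
  else if prefers (P j) x y then x else y

/-- `(x, y)` is a critical spot in `T` for the domain `D`. -/
def CriticalSpot (D : Set (Pref A)) (T : SimpleGraph A) (x y : A) : Prop :=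
  T.Adj x y ∧
  (∀ P ∈ D, peak P ∈ sideSet T x y → SemiSP T y P) ∧
  (∀ P ∈ D, peak P ∈ sideSet T y x → IsBestOf P x (sideSet T x y)) ∧
  (∃ P ∈ D, ∃ P' ∈ D, peak P = peak P' ∧ peak P ∈ sideSet T y x ∧
    prefers P y x ∧ prefers P' x y)

/-- `x` is a path in the graph `G` (pairwise distinct, consecutive vertices adjacent). -/
def IsPathIn (G : SimpleGraph A) {v : ℕ} (x : Fin v → A) : Prop :=
  Function.Injective x ∧
  ∀ (k : ℕ) (h : k + 1 < v), G.Adj (x ⟨k, Nat.lt_of_succ_lt h⟩) (x ⟨k + 1, h⟩)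

/-- `x` is a cycle in the graph `G`. -/
def IsCycleIn (G : SimpleGraph A) {v : ℕ} (x : Fin v → A) : Prop :=
  Function.Injective x ∧
  (∀ (k : ℕ) (h : k + 1 < v), G.Adj (x ⟨k, Nat.lt_of_succ_lt h⟩) (x ⟨k + 1, h⟩)) ∧
  ∀ (h : 0 < v), G.Adj (x ⟨v - 1, Nat.sub_lt h Nat.one_pos⟩) (x ⟨0, h⟩)

/-- The line `L^A` induced by the ranking of the preference `P`. -/
noncomputable def lineOf (P : Pref A) : SimpleGraph A :=
  SimpleGraph.fromRel (fun a b =>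
    ∃ k : ℕ, k + 1 < Fintype.card A ∧ rk P k = a ∧ rk P (k + 1) = b)

/-- The median of three natural numbers. -/
def med3 (a b c : ℕ) : ℕ := max (min a b) (min (max a b) c)

/-- The two-voter profile in which voter `i` reports `Pi` and the other voter reports `Q`. -/
noncomputable def prof2 (i : Fin 2) (Pi Q : Pref A) : Fin 2 → Pref A :=
  Function.update (fun _ => Q) i Pi

/-!
An invariant, tops-only and strategy-proof two-voter rule exists if and only if the adjacency graph
`G` is a tree and all preferences of `D` are semi-single-peaked on `G` with respect to a common
threshold `x`. If they are, the projection rule with threshold `x` is such a rule. Conversely, fix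
one voter's peak in such a rule: as a function of the other voter's peak, the outcome fixes or
collapses each edge of `G`, so it is the identity or constant on each cycle. If the outcome at the
two completely reversed preferences is `x` in either order, the two maps obtained by fixing one of
their peaks have no common fixed point besides `x`. This rules out cycles and makes `x` a common
threshold.

This condition is also what separates `D` from semi-hybridness. Some tree and dual-thresholds
satisfy the first condition of a semi-hybrid domain, since each path through all alternatives does,
and so some satisfy the second by minimality. The third holds as well unless `G` is a tree with a
common threshold. In that case `x` can be chosen in the free zone; if it has one neighbor there, it
violates the third condition, and if it has two, the free zone can be cut at `x`, against
minimality.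

The unique seconds property holds in each non-dictatorial domain: without it, decisiveness of a
voter for one alternative against an adjacent one spreads to all pairs, and a dictator among two
voters becomes a dictator among many by merging the first two voters.
-/

/-! ### Preferences and adjacency -/

section Preferences

variable {α : Type*} [Fintype α] {P : Pref α} {a b c : α}

/-- Weak preference: `a` is `b` or strictly preferred to `b`, encoded as a comparison of ranks. -/
def weaklyPrefers (P : Pref α) (a b : α) : Prop := P.symm a ≤ P.symm b

theorem weaklyPrefers_iff_eq_or_prefers : weaklyPrefers P a b ↔ a = b ∨ prefers P a b :=
  le_iff_eq_or_lt.trans (or_congr_left P.symm.injective.eq_iff)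

theorem prefers_iff_weaklyPrefers_and_ne : prefers P a b ↔ weaklyPrefers P a b ∧ a ≠ b :=
  lt_iff_le_and_ne.trans (and_congr_right' P.symm.injective.ne_iff)

theorem weaklyPrefers.trans (h : weaklyPrefers P a b) (h' : weaklyPrefers P b c) :
    weaklyPrefers P a c := le_trans h h'

theorem weaklyPrefers.antisymm (h : weaklyPrefers P a b) (h' : weaklyPrefers P b a) : a = b :=
  P.symm.injective (le_antisymm h h')

end Preferences

section Peaks

variable {α : Type*} [Fintype α] [Nonempty α] {P P' : Pref α} {a b : α}

theorem rk_eq_iff {k : ℕ} (hk : k < Fintype.card α) : rk P k = a ↔ (P.symm a : ℕ) = k := by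
  rw [rk, dif_pos hk, ← Equiv.eq_symm_apply, eq_comm, Fin.ext_iff]

theorem rk_symm_apply (P : Pref α) (a : α) : rk P (P.symm a) = a := by simp [rk]

theorem weaklyPrefers_peak_left (P : Pref α) (a : α) : weaklyPrefers P (peak P) a := by
  have h0 : (P.symm (peak P) : ℕ) = 0 := (rk_eq_iff Fintype.card_pos).1 rfl
  exact Fin.le_def.2 (h0 ▸ Nat.zero_le _)

theorem eq_peak_of_weaklyPrefers (h : weaklyPrefers P a (peak P)) : a = peak P :=
  h.antisymm (weaklyPrefers_peak_left P a)

theorem prefers_peak_left (h : a ≠ peak P) : prefers P (peak P) a :=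
  prefers_iff_weaklyPrefers_and_ne.2 ⟨weaklyPrefers_peak_left P a, h.symm⟩

end Peaks

section Adjacency

/-- `P'` arises from `P` by exchanging the two top alternatives. -/
structure TopSwap {α : Type*} [Fintype α] [Nonempty α] (P P' : Pref α) : Prop where
  peak_eq : peak P' = second P
  second_eq : second P' = peak P
  rk_eq : ∀ k, 2 ≤ k → rk P k = rk P' k

variable {α : Type*} [Fintype α] [Nontrivial α] {P P' : Pref α} {D : Set (Pref α)} {a b : α}

theorem second_ne_peak (P : Pref α) : second P ≠ peak P := fun h => by
  have h0 := (rk_eq_iff Fintype.card_pos).1 h.symm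
  have h1 := (rk_eq_iff Fintype.one_lt_card).1 (Eq.refl (second P))
  omega

theorem two_le_symm_apply (h : a ≠ peak P) (h' : a ≠ second P) : 2 ≤ (P.symm a : ℕ) := by
  have h0 := mt (rk_eq_iff Fintype.card_pos).2 h.symm
  have h1 := mt (rk_eq_iff Fintype.one_lt_card).2 h'.symm
  omega

theorem eq_peak_or_eq_second (h : weaklyPrefers P a (second P)) : a = peak P ∨ a = second P := by
  by_contra! hne
  have h2 := two_le_symm_apply hne.1 hne.2
  have h1 := (rk_eq_iff Fintype.one_lt_card).1 (Eq.refl (second P))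
  have := Fin.le_def.1 h
  omega

theorem TopSwap.symm (h : TopSwap P P') : TopSwap P' P :=
  ⟨h.second_eq.symm, h.peak_eq.symm, fun k hk => (h.rk_eq k hk).symm⟩

theorem TopSwap.symm_apply_eq (h : TopSwap P P') (hp : a ≠ peak P) (hs : a ≠ second P) :
    P'.symm a = P.symm a :=
  Fin.ext <| (rk_eq_iff (P.symm a).isLt).1 <|
    (h.rk_eq _ (two_le_symm_apply hp hs)).symm.trans (rk_symm_apply P a)

theorem TopSwap.eq_or_eq_peaks (h : TopSwap P P') (hP : weaklyPrefers P a b)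
    (hP' : weaklyPrefers P' b a) : a = b ∨ a = peak P ∧ b = peak P' := by
  by_cases hap : a = peak P
  · have : b = peak P' ∨ b = second P' := eq_peak_or_eq_second (by rwa [h.second_eq, ← hap])
    exact this.symm.imp (fun hb => hap.trans (h.second_eq.symm.trans hb.symm)) (⟨hap, ·⟩)
  by_cases hbs : b = second P
  · exact .inl <| ((eq_peak_or_eq_second (hbs ▸ hP)).resolve_left hap).trans hbs.symm
  have hbp : b ≠ peak P := fun hb => hap (eq_peak_of_weaklyPrefers (hb ▸ hP))
  have has : a ≠ second P := fun ha =>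
    hbs <| (eq_peak_of_weaklyPrefers (by rwa [h.peak_eq, ← ha])).trans h.peak_eq
  rw [weaklyPrefers, h.symm_apply_eq hbp hbs, h.symm_apply_eq hap has] at hP'
  exact .inl (hP.antisymm hP')

theorem adjGraph_adj_iff : (adjGraph D).Adj a b ↔
    ∃ P ∈ D, ∃ P' ∈ D, TopSwap P P' ∧ peak P = a ∧ peak P' = b := by
  have adj_of {a b : α} : DomAdjacent D a b →
      ∃ P ∈ D, ∃ P' ∈ D, TopSwap P P' ∧ peak P = a ∧ peak P' = b := by
    rintro ⟨P, hP, P', hP', rfl, h2, rfl, h4, h5⟩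
    exact ⟨P, hP, P', hP', ⟨h2.symm, h4, h5⟩, rfl, rfl⟩
  rw [adjGraph, SimpleGraph.fromRel_adj]
  constructor
  · rintro ⟨-, h | h⟩
    · exact adj_of h
    · obtain ⟨P, hP, P', hP', hs, ha, hb⟩ := adj_of h
      exact ⟨P', hP', P, hP, hs.symm, hb, ha⟩
  · rintro ⟨P, hP, P', hP', hs, rfl, rfl⟩
    exact ⟨hs.peak_eq ▸ (second_ne_peak P).symm,
      .inl ⟨P, hP, P', hP', rfl, hs.peak_eq.symm, rfl, hs.second_eq, hs.rk_eq⟩⟩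

theorem minimallyRich_of_connected (hD : (adjGraph D).Connected) : MinimallyRich D := fun a => by
  obtain ⟨b, hab⟩ := hD.preconnected.exists_adj_of_nontrivial a
  obtain ⟨P, hP, -, -, -, rfl, -⟩ := adjGraph_adj_iff.1 hab
  exact ⟨P, hP, rfl⟩

end Adjacency

/-! ### Intervals, medians and projections in trees -/

section Intervals

variable {V : Type*} {T : SimpleGraph V} {c m p w x y z : V}

theorem intv_comm (T : SimpleGraph V) (x y : V) : intv T x y = intv T y x := by
  ext z
  simp only [intv, Set.mem_ofPred_eq, T.dist_comm (u := x), T.dist_comm (v := y), add_comm]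

theorem left_mem_intv (T : SimpleGraph V) (x y : V) : x ∈ intv T x y := by simp [intv]

theorem right_mem_intv (T : SimpleGraph V) (x y : V) : y ∈ intv T x y := by simp [intv]

theorem eq_of_mem_intv_of_mem_intv (hT : T.Connected) (hy : y ∈ intv T x z) (hz : z ∈ intv T x y) :
    y = z := by
  simp only [intv, Set.mem_ofPred_eq, T.dist_comm (u := z)] at hy hz
  exact hT.dist_eq_zero_iff.1 (by omega)

theorem eq_of_mem_intv_self (hT : T.Connected) (h : y ∈ intv T x x) : y = x :=
  eq_of_mem_intv_of_mem_intv hT h (left_mem_intv T x y)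

theorem mem_intv_trans (hT : T.Connected) (hz : z ∈ intv T x y) (hw : w ∈ intv T x z) :
    w ∈ intv T x y := by
  simp only [intv, Set.mem_ofPred_eq] at *
  have := hT.dist_triangle (u := w) (v := z) (w := y)
  have := hT.dist_triangle (u := x) (v := w) (w := y)
  omega

theorem mem_intv_of_mem_left (hT : T.Connected) (hz : z ∈ intv T x y) (hw : w ∈ intv T x z) :
    z ∈ intv T w y := by
  simp only [intv, Set.mem_ofPred_eq] at *
  have := hT.dist_triangle (u := w) (v := z) (w := y)
  have := hT.dist_triangle (u := x) (v := w) (w := y)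
  omega

theorem mem_intv_of_forall_mem_support (hT : T.Connected)
    (h : ∀ w : T.Walk x y, z ∈ w.support) : z ∈ intv T x y := by
  obtain ⟨p, hp⟩ := hT.exists_walk_length_eq_dist x y
  have hlen := congrArg SimpleGraph.Walk.length (p.take_spec (h p))
  rw [SimpleGraph.Walk.length_append, hp] at hlen
  have := T.dist_le (p.takeUntil z (h p))
  have := T.dist_le (p.dropUntil z (h p))
  have := hT.dist_triangle (u := x) (v := z) (w := y)
  simp only [intv, Set.mem_ofPred_eq]
  omega

theorem mem_support_of_mem_intv (hT : T.IsTree) (hz : z ∈ intv T x y) (w : T.Walk x y) :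
    z ∈ w.support := by
  obtain ⟨p, hp⟩ := hT.connected.exists_walk_length_eq_dist x z
  obtain ⟨q, hq⟩ := hT.connected.exists_walk_length_eq_dist z y
  have hpq : (p.append q).IsPath :=
    SimpleGraph.Walk.isPath_of_length_eq_dist _ (by rwa [SimpleGraph.Walk.length_append, hp, hq])
  have hbypass : w.bypass = p.append q :=
    (hT.existsUnique_path x y).unique w.bypass_isPath hpq
  refine w.support_bypass_subset_support ?_
  rw [hbypass, SimpleGraph.Walk.mem_support_append_iff]
  exact .inl p.end_mem_support

theorem mem_intv_iff_mem_support (hT : T.IsTree) {p : T.Walk x y} (hp : p.IsPath) :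
    z ∈ intv T x y ↔ z ∈ p.support := by
  refine ⟨(mem_support_of_mem_intv hT · p), fun hz => ?_⟩
  refine mem_intv_of_forall_mem_support hT.connected fun w => w.support_bypass_subset_support ?_
  rwa [(hT.existsUnique_path x y).unique w.bypass_isPath hp]

theorem mem_intv_or_mem_intv (hT : T.IsTree) (hz : z ∈ intv T x y) (v : V) :
    z ∈ intv T x v ∨ z ∈ intv T v y := by
  obtain ⟨p, hp, -⟩ := hT.connected.exists_path_of_dist x v
  obtain ⟨q, hq, -⟩ := hT.connected.exists_path_of_dist v y
  rw [mem_intv_iff_mem_support hT hp, mem_intv_iff_mem_support hT hq,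
    ← SimpleGraph.Walk.mem_support_append_iff]
  exact mem_support_of_mem_intv hT hz _

theorem exists_adj_mem_intv_dist_lt (hT : T.Connected) (hxy : x ≠ y) :
    ∃ v, T.Adj x v ∧ v ∈ intv T x y ∧ T.dist v y < T.dist x y := by
  obtain ⟨p, hp⟩ := hT.exists_walk_length_eq_dist x y
  cases p with
  | nil => exact absurd rfl hxy
  | @cons _ v _ hadj q =>
    rw [SimpleGraph.Walk.length_cons] at hp
    have h1 : T.dist x v = 1 := SimpleGraph.dist_eq_one_iff_adj.2 hadj
    have := T.dist_le q
    have := hT.dist_triangle (u := x) (v := v) (w := y)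
    exact ⟨v, hadj, by simp only [intv, Set.mem_ofPred_eq]; omega, by omega⟩

theorem adj_of_forall_mem_intv (hT : T.Connected) (hxy : x ≠ y)
    (h : ∀ s ∈ intv T x y, s = x ∨ s = y) : T.Adj x y := by
  obtain ⟨v, hxv, hv, -⟩ := exists_adj_mem_intv_dist_lt hT hxy
  exact (h v hv).resolve_left hxv.ne' ▸ hxv

theorem mem_intv_of_adj_of_adj (hT : T.IsTree) (hyx : T.Adj y x) (hxz : T.Adj x z) (hyz : y ≠ z) :
    x ∈ intv T y z := by
  have hp : (SimpleGraph.Walk.cons hyx (.cons hxz .nil)).IsPath := by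
    simp [SimpleGraph.Walk.cons_isPath_iff, hyx.ne, hxz.ne, hyz]
  exact (mem_intv_iff_mem_support hT hp).2 (by simp)

theorem exists_median (hT : T.IsTree) (p x c : V) :
    ∃ m, m ∈ intv T p x ∧ m ∈ intv T c p ∧ m ∈ intv T c x := by
  obtain ⟨m, ⟨hmx, hmc⟩, hmin⟩ := (measure fun m => T.dist m x).wf.has_min
    {m | m ∈ intv T p x ∧ m ∈ intv T p c} ⟨p, left_mem_intv T p x, left_mem_intv T p c⟩
  refine ⟨m, hmx, intv_comm T p c ▸ hmc, ?_⟩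
  rcases eq_or_ne m x with rfl | hx
  · exact right_mem_intv T c m
  rcases eq_or_ne m c with rfl | hc
  · exact left_mem_intv T m x
  obtain ⟨u, hmu, hux, hlt⟩ := exists_adj_mem_intv_dist_lt hT.connected hx
  obtain ⟨v, hmv, hvc, -⟩ := exists_adj_mem_intv_dist_lt hT.connected hc
  have huv : u ≠ v := fun huv => hmin u
    ⟨intv_comm T x p ▸ mem_intv_trans hT.connected (intv_comm T p x ▸ hmx) (intv_comm T m x ▸ hux),
      intv_comm T c p ▸ mem_intv_trans hT.connected (intv_comm T p c ▸ hmc)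
        (intv_comm T m c ▸ huv ▸ hvc)⟩ hlt
  have hm : m ∈ intv T v u := mem_intv_of_adj_of_adj hT hmv.symm hmu huv.symm
  have hm' : m ∈ intv T c u := (mem_intv_or_mem_intv hT hm c).resolve_left fun h =>
    hmv.ne (eq_of_mem_intv_of_mem_intv hT.connected (intv_comm T v c ▸ h) (intv_comm T m c ▸ hvc))
  exact (mem_intv_or_mem_intv hT hm' x).resolve_right fun h =>
    hmu.ne (eq_of_mem_intv_of_mem_intv hT.connected h (intv_comm T m x ▸ hux))

theorem isProjPt_intv_iff (hT : T.IsTree) :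
    IsProjPt T (intv T p x) c m ↔ m ∈ intv T p x ∧ m ∈ intv T c p ∧ m ∈ intv T c x := by
  refine ⟨fun h => ⟨h.1, h.2 p (left_mem_intv T p x), h.2 x (right_mem_intv T p x)⟩, ?_⟩
  rintro ⟨hm, hcp, hcx⟩
  refine ⟨hm, fun b hb => ?_⟩
  by_contra hcb
  have hbp := (mem_intv_or_mem_intv hT hcp b).resolve_left hcb
  have hbx := (mem_intv_or_mem_intv hT hcx b).resolve_left hcb
  have hmb : m = b := eq_of_mem_intv_of_mem_intv hT.connected (intv_comm T b x ▸ hbx)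
    (intv_comm T m x ▸ mem_intv_of_mem_left hT.connected hb (intv_comm T b p ▸ hbp))
  exact hcb (hmb ▸ right_mem_intv T c m)

variable [Fintype V]

theorem projOn_eq_of_isProjPt (hT : T.Connected) {B : Set V} (h : IsProjPt T B c m) :
    projOn T B c = m := by
  have hex : ∃ m, IsProjPt T B c m := ⟨m, h⟩
  rw [projOn, dif_pos hex]
  exact eq_of_mem_intv_of_mem_intv hT (hex.choose_spec.2 _ h.1) (h.2 _ hex.choose_spec.1)

theorem projOn_spec (hT : T.IsTree) (p x c : V) :
    IsProjPt T (intv T p x) c (projOn T (intv T p x) c) := by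
  obtain ⟨m, hm⟩ := exists_median hT p x c
  have hproj := (isProjPt_intv_iff hT).2 hm
  rwa [projOn_eq_of_isProjPt hT.connected hproj]

theorem projOn_intv_eq_iff (hT : T.IsTree) :
    projOn T (intv T p x) c = m ↔ m ∈ intv T p x ∧ m ∈ intv T c p ∧ m ∈ intv T c x :=
  ⟨fun h => (isProjPt_intv_iff hT).1 (h ▸ projOn_spec hT p x c),
    fun h => projOn_eq_of_isProjPt hT.connected ((isProjPt_intv_iff hT).2 h)⟩

end Intervals

section SemiSinglePeaked

variable {α : Type*} [Fintype α] [Nonempty α] {T : SimpleGraph α} {P : Pref α} {x y : α}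

theorem semiSP_iff (hT : T.IsTree) : SemiSP T x P ↔
    ∀ s d, s ≠ d → s ∈ intv T (peak P) x → s ∈ intv T (peak P) d → prefers P s d := by
  constructor
  · rintro ⟨hpath, hproj⟩ s d hsd hsx hsd'
    by_cases hd : d ∈ intv T (peak P) x
    · exact hpath s d hsx hd hsd hsd'
    have hπ := projOn_spec hT (peak P) x d
    by_cases hsπ : s = projOn T (intv T (peak P) x) d
    · exact hsπ ▸ hproj d hd
    have hsπ' : s ∈ intv T (peak P) (projOn T (intv T (peak P) x) d) :=
      (mem_intv_or_mem_intv hT hsd' _).resolve_right fun h =>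
        hsπ (eq_of_mem_intv_of_mem_intv hT.connected (intv_comm T _ d ▸ h) (hπ.2 s hsx))
    exact lt_trans (hpath s _ hsx hπ.1 hsπ hsπ') (hproj d hd)
  · intro h
    refine ⟨fun c d hc _ hcd hcd' => h c d hcd hc hcd', fun c hc => ?_⟩
    have hπ := projOn_spec hT (peak P) x c
    exact h _ c (fun e => hc (e ▸ hπ.1)) hπ.1 (intv_comm T c _ ▸ hπ.2 _ (left_mem_intv T _ x))

theorem SemiSP.of_mem_intv (hT : T.IsTree) (h : SemiSP T x P) (hy : y ∈ intv T (peak P) x) :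
    SemiSP T y P :=
  (semiSP_iff hT).2 fun s d hsd hs =>
    (semiSP_iff hT).1 h s d hsd (mem_intv_trans hT.connected hy hs)

end SemiSinglePeaked

/-! ### Gates -/

/-- `a` is the gate of the part `X` of a tree `G`: it lies in `X`, and every path that leaves `X`
passes through it. -/
structure HasGate {V : Type*} (G : SimpleGraph V) (X : Set V) (a : V) : Prop where
  mem : a ∈ X
  mem_intv : ∀ x ∈ X, ∀ y ∉ X, a ∈ intv G x y

section Gates

variable {V : Type*} {G T : SimpleGraph V} {X Y : Set V} {a b v x y z : V}

theorem mem_support_of_forall_exit_eq (hX : ∀ x ∈ X, ∀ y ∉ X, G.Adj x y → x = a)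
    (w : G.Walk x y) (hx : x ∈ X) (hy : y ∉ X) : a ∈ w.support := by
  induction w with
  | nil => exact absurd hx hy
  | @cons u v _ hadj q ih =>
    rw [SimpleGraph.Walk.support_cons, List.mem_cons]
    by_cases hv : v ∈ X
    · exact .inr (ih hv hy)
    · exact .inl (hX u hx v hv hadj).symm

theorem hasGate_iff (hG : G.Connected) :
    HasGate G X a ↔ a ∈ X ∧ ∀ x ∈ X, ∀ y ∉ X, G.Adj x y → x = a := by
  refine ⟨fun h => ⟨h.mem, fun x hx y hy hxy => ?_⟩, fun h => ⟨h.1, fun _ hx _ hy =>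
    mem_intv_of_forall_mem_support hG fun w => mem_support_of_forall_exit_eq h.2 w hx hy⟩⟩
  have hsum := h.mem_intv x hx y hy
  rw [intv, Set.mem_ofPred_eq, SimpleGraph.dist_eq_one_iff_adj.2 hxy] at hsum
  have hay : G.dist a y ≠ 0 := fun h0 => hy (hG.dist_eq_zero_iff.1 h0 ▸ h.mem)
  exact hG.dist_eq_zero_iff.1 (by omega)

theorem hasGate_singleton (G : SimpleGraph V) (a : V) : HasGate G {a} a where
  mem := rfl
  mem_intv := by rintro _ rfl y -; exact left_mem_intv G _ y

theorem hasGate_sideSet (hT : T.IsTree) (a b : V) : HasGate T (sideSet T a b) a where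
  mem := left_mem_intv T a b
  mem_intv _ hx y hy := (mem_intv_or_mem_intv hT hx y).resolve_right hy

theorem HasGate.mem_of_mem_intv (hG : G.Connected) (h : HasGate G X a) (hx : x ∈ X) (hy : y ∈ X)
    (hv : v ∈ intv G x y) : v ∈ X := by
  by_contra hvX
  have hvx := h.mem_intv x hx v hvX
  have hvy := h.mem_intv y hy v hvX
  rw [intv_comm] at hvy
  have hav := mem_intv_of_mem_left hG hv hvx
  exact hvX (eq_of_mem_intv_of_mem_intv hG (intv_comm G v y ▸ hvy) (intv_comm G a y ▸ hav) ▸ h.mem)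

theorem intv_eq_intv_of_adj_imp (hG : G.IsTree) (hT : T.IsTree) (hX : HasGate G X a)
    (hGT : ∀ x ∈ X, ∀ y ∈ X, G.Adj x y → T.Adj x y) (hx : x ∈ X) (hy : y ∈ X) :
    intv G x y = intv T x y := by
  obtain ⟨p, hp, -⟩ := hG.connected.exists_path_of_dist x y
  have hsupp : ∀ v ∈ p.support, v ∈ X := fun v hv =>
    hX.mem_of_mem_intv hG.connected hx hy ((mem_intv_iff_mem_support hG hp).2 hv)
  have hedges : ∀ e ∈ p.edges, e ∈ T.edgeSet := by
    rintro ⟨u, v⟩ he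
    exact hGT u (hsupp u (p.fst_mem_support_of_mem_edges he)) v
      (hsupp v (p.snd_mem_support_of_mem_edges he)) (p.adj_of_mem_edges he)
  ext z
  rw [mem_intv_iff_mem_support hG hp, mem_intv_iff_mem_support hT (hp.transfer hedges),
    SimpleGraph.Walk.support_transfer]

theorem eq_of_mem_sideSet_of_mem_intv (hT : T.Connected) (hz : z ∈ sideSet T a b)
    (hz' : z ∈ intv T a b) : z = a :=
  eq_of_mem_intv_of_mem_intv hT (intv_comm T a b ▸ hz') (intv_comm T z b ▸ hz)

theorem disjoint_sideSet (hT : T.Connected) (hab : a ≠ b) :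
    Disjoint (sideSet T a b) (sideSet T b a) :=
  Set.disjoint_left.2 fun _ ha hb => hab (eq_of_mem_intv_of_mem_intv hT ha hb)

end Gates

/-- The alternatives outside `X` and `Y`, together with `a` and `b`. For parts `X`, `Y` with gates
`a`, `b` this is the set that can serve as the free zone of a semi-hybrid domain. -/
def zone {V : Type*} (X Y : Set V) (a b : V) : Set V := {z | (z ∈ X → z = a) ∧ (z ∈ Y → z = b)}

section DualThresholds

variable {V : Type*} {T : SimpleGraph V} {X Y : Set V} {a b : V}

theorem zone_comm (X Y : Set V) (a b : V) : zone X Y a b = zone Y X b a :=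
  Set.ext fun _ => and_comm

theorem left_mem_zone (b : V) (h : Disjoint X Y) (hX : a ∈ X) : a ∈ zone X Y a b :=
  ⟨fun _ => rfl, fun ha => absurd ha (Set.disjoint_left.1 h hX)⟩

theorem dualThresholds_iff [Fintype V] (hT : T.IsTree) : DualThresholds T a b ↔
    a ≠ b ∧ ∀ z ∉ intv T a b, z ∈ sideSet T a b ∨ z ∈ sideSet T b a := by
  refine and_congr_right fun _ => forall₂_congr fun z _ => or_congr ?_ ?_
  · exact (projOn_intv_eq_iff hT).trans ⟨fun h => h.2.2, fun h =>
      ⟨left_mem_intv T a b, right_mem_intv T z a, h⟩⟩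
  · exact (projOn_intv_eq_iff hT).trans ⟨fun h => h.2.1, fun h =>
      ⟨right_mem_intv T a b, h, right_mem_intv T z b⟩⟩

theorem DualThresholds.symm [Fintype V] (hT : T.IsTree) (h : DualThresholds T a b) :
    DualThresholds T b a := by
  obtain ⟨hab, h⟩ := (dualThresholds_iff hT).1 h
  exact (dualThresholds_iff hT).2 ⟨hab.symm, fun z hz => (h z (intv_comm T b a ▸ hz)).symm⟩

theorem DualThresholds.intv_eq_zone [Fintype V] (hT : T.IsTree) (h : DualThresholds T a b) :
    intv T a b = zone (sideSet T a b) (sideSet T b a) a b := by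
  obtain ⟨-, h⟩ := (dualThresholds_iff hT).1 h
  refine Set.Subset.antisymm (fun z hz => ⟨?_, ?_⟩) fun z hz => by_contra fun hz' => ?_
  · exact fun hza => eq_of_mem_sideSet_of_mem_intv hT.connected hza hz
  · exact fun hzb => eq_of_mem_sideSet_of_mem_intv hT.connected hzb (intv_comm T a b ▸ hz)
  · rcases h z hz' with hza | hzb
    · exact hz' (hz.1 hza ▸ left_mem_intv T a b)
    · exact hz' (hz.2 hzb ▸ right_mem_intv T a b)

theorem intv_eq_zone_of_zone_subset (hT : T.IsTree) (hX : HasGate T X a) (hY : HasGate T Y b)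
    (hXY : Disjoint X Y) (h : zone X Y a b ⊆ intv T a b) : intv T a b = zone X Y a b := by
  refine (Set.Subset.antisymm h fun z hz => ⟨fun hzX => ?_, fun hzY => ?_⟩).symm
  · exact eq_of_mem_sideSet_of_mem_intv hT.connected
      (hX.mem_intv z hzX b (Set.disjoint_right.1 hXY hY.mem)) hz
  · exact eq_of_mem_sideSet_of_mem_intv hT.connected
      (hY.mem_intv z hzY a (Set.disjoint_left.1 hXY hX.mem)) (intv_comm T a b ▸ hz)

theorem sideSet_eq_of_zone_subset (hT : T.IsTree) (hX : HasGate T X a) (hY : HasGate T Y b)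
    (hXY : Disjoint X Y) (h : zone X Y a b ⊆ intv T a b) : sideSet T a b = X := by
  have hbX : b ∉ X := Set.disjoint_right.1 hXY hY.mem
  refine Set.Subset.antisymm (fun z hz => by_contra fun hzX => ?_) fun z hz =>
    hX.mem_intv z hz b hbX
  by_cases hzY : z ∈ Y
  · exact Set.disjoint_left.1 hXY hX.mem (hY.mem_of_mem_intv hT.connected hzY hY.mem hz)
  · have hza := eq_of_mem_sideSet_of_mem_intv hT.connected hz
      (h ⟨fun h => absurd h hzX, fun h => absurd h hzY⟩)
    exact hzX (hza ▸ hX.mem)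

theorem dualThresholds_of_zone_subset [Fintype V] (hT : T.IsTree) (hX : HasGate T X a)
    (hY : HasGate T Y b) (hXY : Disjoint X Y) (h : zone X Y a b ⊆ intv T a b) :
    DualThresholds T a b := by
  have haY : a ∉ Y := Set.disjoint_left.1 hXY hX.mem
  have hbX : b ∉ X := Set.disjoint_right.1 hXY hY.mem
  refine (dualThresholds_iff hT).2 ⟨fun hab => haY (hab ▸ hY.mem), fun z hz => ?_⟩
  by_contra! hside
  exact hz <| h ⟨fun hzX => absurd (hX.mem_intv z hzX b hbX) hside.1,
    fun hzY => absurd (hY.mem_intv z hzY a haY) hside.2⟩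

end DualThresholds

/-- The restriction that a semi-hybrid preference satisfies on one side of the free zone: peaks
in `X` make `P` semi-single-peaked with respect to the gate `a`, and peaks outside `X` make `a` the
best alternative of `X`. -/
def RespectsGate {α : Type*} [Fintype α] [Nonempty α] (T : SimpleGraph α) (X : Set α) (a : α)
    (P : Pref α) : Prop :=
  (peak P ∈ X → SemiSP T a P) ∧ (peak P ∉ X → IsBestOf P a X)

section RespectsGate

variable {α : Type*} [Fintype α] [Nonempty α] {G T : SimpleGraph α} {P : Pref α} {X : Set α}
  {a b x : α}

theorem semiSP_peak (hT : T.IsTree) (P : Pref α) : SemiSP T (peak P) P :=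
  (semiSP_iff hT).2 fun s d hsd hs _ => by
    obtain rfl := eq_of_mem_intv_self hT.connected hs
    exact prefers_peak_left hsd.symm

theorem isBestOf_peak (h : peak P ∈ X) : IsBestOf P (peak P) X :=
  ⟨h, fun _ _ => prefers_peak_left⟩

theorem respectsGate_singleton (hT : T.IsTree) (a : α) (P : Pref α) : RespectsGate T {a} a P := by
  constructor
  · rintro rfl
    exact semiSP_peak hT P
  · exact fun _ => ⟨rfl, by rintro _ rfl h; exact absurd rfl h⟩

theorem SemiSP.respectsGate (hT : T.IsTree) (h : SemiSP T a P) (hX : HasGate T X a) :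
    RespectsGate T X a P :=
  ⟨fun _ => h, fun hp => ⟨hX.mem, fun y hy hya =>
    (semiSP_iff hT).1 h a y hya.symm (right_mem_intv T _ a)
      (intv_comm T y _ ▸ hX.mem_intv y hy _ hp)⟩⟩

theorem RespectsGate.congr (hG : G.IsTree) (hT : T.IsTree) (hX : HasGate G X a)
    (hGT : ∀ x ∈ X, ∀ y ∈ X, intv G x y = intv T x y) (h : RespectsGate G X a P) :
    RespectsGate T X a P := by
  refine ⟨fun hp => (semiSP_iff hT).2 fun s d hsd hs hs' => ?_, h.2⟩
  rw [← hGT _ hp _ hX.mem] at hs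
  by_cases hd : d ∈ X
  · exact (semiSP_iff hG).1 (h.1 hp) s d hsd hs (hGT _ hp _ hd ▸ hs')
  · exact (semiSP_iff hG).1 (h.1 hp) s d hsd hs
      (mem_intv_trans hG.connected (hX.mem_intv _ hp _ hd) hs)

theorem SemiHybridPref.symm (h : SemiHybridPref T a b P) : SemiHybridPref T b a P :=
  ⟨h.2.1, h.1, fun hp => (h.2.2 (intv_comm T b a ▸ hp)).symm⟩

theorem SemiHybridPref.respectsGate (hT : T.IsTree) (hab : DualThresholds T a b)
    (h : SemiHybridPref T a b P) : RespectsGate T (sideSet T a b) a P := by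
  constructor
  · intro hp
    by_cases hpa : peak P = a
    · exact hpa ▸ semiSP_peak hT P
    · exact (h.1 ⟨hp, hpa⟩).1
  · intro hp
    by_cases hp' : peak P ∈ sideSet T b a \ {b}
    · exact (h.2.1 hp').2
    · refine (h.2.2 (hab.intv_eq_zone hT ▸ ⟨fun hp'' => absurd hp'' hp, fun hp'' => ?_⟩)).1
      by_contra hpb
      exact hp' ⟨hp'', hpb⟩

theorem semiHybridPref_iff (hT : T.IsTree) (hab : DualThresholds T a b) : SemiHybridPref T a b P ↔
    RespectsGate T (sideSet T a b) a P ∧ RespectsGate T (sideSet T b a) b P := by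
  refine ⟨fun h => ⟨h.respectsGate hT hab, h.symm.respectsGate hT (hab.symm hT)⟩, fun h => ?_⟩
  have hdisj := Set.disjoint_left.1 (disjoint_sideSet hT.connected hab.1)
  have hbest {a : α} {X : Set α} (hX : RespectsGate T X a P) (hzone : peak P ∈ X → peak P = a) :
      IsBestOf P a X := by
    by_cases hp : peak P ∈ X
    · exact hzone hp ▸ isBestOf_peak hp
    · exact hX.2 hp
  refine ⟨fun hp => ⟨h.1.1 hp.1, h.2.2 (hdisj hp.1)⟩,
    fun hp => ⟨h.2.1 hp.1, h.1.2 fun hp' => hdisj hp' hp.1⟩, fun hp => ?_⟩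
  rw [hab.intv_eq_zone hT] at hp
  exact ⟨hbest h.1 hp.1, hbest h.2 hp.2⟩

end RespectsGate

/-! ### Gluing two parts along a path -/

section Gluing

variable {V : Type*} {G T : SimpleGraph V} {X Y : Set V} {a b x y : V} {n : ℕ}
  {p : Fin (n + 1) ↪ V}

/-- The graph on `V` that keeps the edges of `G` inside `X` and inside `Y`, and otherwise consists
of the path with vertices `p 0, …, p n`. -/
def glue (G : SimpleGraph V) (X Y : Set V) (p : Fin (n + 1) ↪ V) : SimpleGraph V :=
  (G.induce X).spanningCoe ⊔ (G.induce Y).spanningCoe ⊔ (SimpleGraph.pathGraph (n + 1)).map p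

theorem glue_adj : (glue G X Y p).Adj x y ↔
    (G.Adj x y ∧ x ∈ X ∧ y ∈ X) ∨ (G.Adj x y ∧ x ∈ Y ∧ y ∈ Y) ∨
      ∃ i j : Fin (n + 1), ((i : ℕ) + 1 = j ∨ (j : ℕ) + 1 = i) ∧ p i = x ∧ p j = y := by
  simp only [glue, SimpleGraph.sup_adj, SimpleGraph.map_adj, SimpleGraph.pathGraph_adj, or_assoc]
  simp

theorem glue_comm (G : SimpleGraph V) (X Y : Set V) (p : Fin (n + 1) ↪ V) :
    glue G X Y p = glue G Y X p := by
  rw [glue, glue, sup_comm (G.induce X).spanningCoe]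

theorem HasGate.reachable_of_adj_imp (hG : G.Connected) (hX : HasGate G X a)
    (hGT : ∀ x ∈ X, ∀ y ∈ X, G.Adj x y → T.Adj x y) (hx : x ∈ X) : T.Reachable x a := by
  obtain ⟨w⟩ := hG.preconnected x a
  have hexit := ((hasGate_iff hG).1 hX).2
  clear hX
  induction w with
  | nil => exact .refl _
  | @cons u v a hadj _ ih =>
    by_cases hv : v ∈ X
    · exact (hGT u hx v hv hadj).reachable.trans (ih hv hexit)
    · rw [hexit u hx v hv hadj]

theorem glue_connected (hG : G.Connected) (hX : HasGate G X a) (hY : HasGate G Y b)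
    (hp₀ : p 0 = a) (hpn : p (Fin.last n) = b) (hp : Set.range p = zone X Y a b) :
    (glue G X Y p).Connected := by
  have hpath (i : Fin (n + 1)) : (glue G X Y p).Reachable a (p i) := by
    have hmono : (SimpleGraph.pathGraph (n + 1)).map p ≤ glue G X Y p := le_sup_right
    have hi := (SimpleGraph.pathGraph_connected n).preconnected 0 i
    exact hp₀ ▸ (hi.map (SimpleGraph.Embedding.map p _).toHom).mono hmono
  refine (SimpleGraph.connected_iff_exists_forall_reachable _).2 ⟨a, fun z => ?_⟩
  by_cases hzX : z ∈ X
  · exact (hX.reachable_of_adj_imp hG (fun _ hx _ hy h => glue_adj.2 (.inl ⟨h, hx, hy⟩)) hzX).symm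
  by_cases hzY : z ∈ Y
  · refine (hpn ▸ hpath (Fin.last n)).trans (hY.reachable_of_adj_imp hG ?_ hzY).symm
    exact fun _ hx _ hy h => glue_adj.2 (.inr (.inl ⟨h, hx, hy⟩))
  · obtain ⟨i, rfl⟩ : z ∈ Set.range p := hp ▸ ⟨fun h => absurd h hzX, fun h => absurd h hzY⟩
    exact hpath i

theorem eq_of_glue_adj_of_notMem (hXY : Disjoint X Y) (hp : Set.range p ⊆ zone X Y a b)
    (hx : x ∈ X) (hy : y ∉ X) (hxy : (glue G X Y p).Adj x y) : x = a := by
  rcases glue_adj.1 hxy with ⟨-, -, hy'⟩ | ⟨-, hx', -⟩ | ⟨i, -, -, rfl, -⟩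
  · exact absurd hy' hy
  · exact absurd hx' (Set.disjoint_left.1 hXY hx)
  · exact (hp ⟨i, rfl⟩).1 hx

theorem adj_of_glue_adj (hXY : Disjoint X Y) (hp : Set.range p ⊆ zone X Y a b) (hx : x ∈ X)
    (hy : y ∈ X) (hxy : (glue G X Y p).Adj x y) : G.Adj x y := by
  rcases glue_adj.1 hxy with ⟨h, -, -⟩ | ⟨-, hx', -⟩ | ⟨i, j, -, rfl, rfl⟩
  · exact h
  · exact absurd hx' (Set.disjoint_left.1 hXY hx)
  · exact absurd (((hp ⟨i, rfl⟩).1 hx).trans ((hp ⟨j, rfl⟩).1 hy).symm) hxy.ne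

theorem eq_of_glue_adj_of_prefix (hXY : Disjoint X Y) (hp : Set.range p ⊆ zone X Y a b)
    (hp₀ : p 0 = a) (hpn : p (Fin.last n) = b) {k : Fin (n + 1)} (hk : k ≠ Fin.last n)
    (hx : x ∈ X ∪ p '' Set.Iic k) (hy : y ∉ X ∪ p '' Set.Iic k) (hxy : (glue G X Y p).Adj x y) :
    x = p k := by
  rcases glue_adj.1 hxy with ⟨-, -, hy'⟩ | ⟨-, hx', -⟩ | ⟨i, j, hij, rfl, rfl⟩
  · exact absurd (.inl hy') hy
  · obtain ⟨i, hi, rfl⟩ := hx.resolve_left (Set.disjoint_right.1 hXY hx')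
    have : i = Fin.last n := p.injective (((hp ⟨i, rfl⟩).2 hx').trans hpn.symm)
    exact absurd (Fin.last_le_iff.1 (this ▸ hi)) hk
  · have hkj : k < j := not_le.1 fun hjk => hy (.inr ⟨j, hjk, rfl⟩)
    have hik : i ≤ k := by
      rcases hx with hx | ⟨i', hi', hii'⟩
      · exact p.injective (((hp ⟨i, rfl⟩).1 hx).trans hp₀.symm) ▸ Fin.zero_le k
      · exact p.injective hii' ▸ hi'
    congr 1
    simp only [Fin.ext_iff, Fin.lt_def, Fin.le_def] at *
    omega

theorem exists_fin_embedding_range_eq {S : Set V} (hS : S.Finite) (ha : a ∈ S) (hb : b ∈ S)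
    (hab : a ≠ b) :
    ∃ (n : ℕ) (p : Fin (n + 1) ↪ V), p 0 = a ∧ p (Fin.last n) = b ∧ Set.range p = S := by
  have := hS.fintype
  have : Nonempty S := ⟨⟨a, ha⟩⟩
  obtain ⟨n, hn⟩ := Nat.exists_eq_succ_of_ne_zero (Fintype.card_ne_zero (α := S))
  let e : Fin (n + 1) ≃ S := (Fintype.equivFinOfCardEq hn).symm
  let e' := (Equiv.swap 0 (e.symm ⟨a, ha⟩)).trans e
  let q := (Equiv.swap (Fin.last n) (e'.symm ⟨b, hb⟩)).trans e'
  have ha' : e'.symm ⟨a, ha⟩ = 0 := by simp [e']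
  have hb' : (0 : Fin (n + 1)) ≠ e'.symm ⟨b, hb⟩ := fun h =>
    hab (congrArg Subtype.val (e'.symm.injective (ha'.trans h)))
  have hlast : (0 : Fin (n + 1)) ≠ Fin.last n := fun h =>
    hb' (le_antisymm (Fin.zero_le _) (h ▸ Fin.le_last _))
  have hq₀ : q 0 = ⟨a, ha⟩ := by
    rw [Equiv.trans_apply, Equiv.swap_apply_of_ne_of_ne hlast hb', ← ha', Equiv.apply_symm_apply]
  refine ⟨n, q.toEmbedding.trans (Function.Embedding.subtype _), ?_, ?_, ?_⟩
  · simp [hq₀]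
  · simp [q]
  · exact (q.surjective.range_comp Subtype.val).trans Subtype.range_coe

theorem exists_isTree_zone_subset_intv [Finite V] (hG : G.Connected) (hX : HasGate G X a)
    (hY : HasGate G Y b) (hXY : Disjoint X Y) : ∃ T : SimpleGraph V, T.IsTree ∧
      HasGate T X a ∧ HasGate T Y b ∧ zone X Y a b ⊆ intv T a b ∧
      (∀ x ∈ X, ∀ y ∈ X, T.Adj x y → G.Adj x y) ∧ ∀ x ∈ Y, ∀ y ∈ Y, T.Adj x y → G.Adj x y := by
  obtain ⟨n, p, hp₀, hpn, hp⟩ := exists_fin_embedding_range_eq (S := zone X Y a b)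
    (Set.toFinite _) (left_mem_zone b hXY hX.mem)
    (zone_comm X Y a b ▸ left_mem_zone a hXY.symm hY.mem)
    (fun hab => Set.disjoint_left.1 hXY hX.mem (hab ▸ hY.mem))
  have hp' : Set.range p ⊆ zone Y X b a := (hp.trans (zone_comm X Y a b)).le
  obtain ⟨T, hle, hT⟩ := (glue_connected hG hX hY hp₀ hpn hp).exists_isTree_le
  have hle' : T ≤ glue G Y X p := glue_comm G X Y p ▸ hle
  refine ⟨T, hT, (hasGate_iff hT.connected).2 ⟨hX.mem, fun x hx y hy hxy =>
      eq_of_glue_adj_of_notMem hXY hp.le hx hy (hle hxy)⟩,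
    (hasGate_iff hT.connected).2 ⟨hY.mem, fun x hx y hy hxy =>
      eq_of_glue_adj_of_notMem hXY.symm hp' hx hy (hle' hxy)⟩, fun z hz => ?_,
    fun x hx y hy hxy => adj_of_glue_adj hXY hp.le hx hy (hle hxy),
    fun x hx y hy hxy => adj_of_glue_adj hXY.symm hp' hx hy (hle' hxy)⟩
  obtain ⟨k, rfl⟩ := hp.ge hz
  rcases eq_or_ne k (Fin.last n) with rfl | hk
  · exact hpn ▸ right_mem_intv T a _
  have hgate : HasGate T (X ∪ p '' Set.Iic k) (p k) := (hasGate_iff hT.connected).2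
    ⟨.inr ⟨k, Set.self_mem_Iic, rfl⟩, fun x hx y hy hxy =>
      eq_of_glue_adj_of_prefix hXY hp.le hp₀ hpn hk hx hy (hle hxy)⟩
  refine hgate.mem_intv a (.inl hX.mem) b ?_
  rintro (hbX | ⟨i, hi, hib⟩)
  · exact Set.disjoint_right.1 hXY hY.mem hbX
  · exact hk (Fin.last_le_iff.1 (p.injective (hib.trans hpn.symm) ▸ hi))

end Gluing

/-! ### Semi-hybrid domains -/

/-- Two disjoint parts of `G` with gates `a`, `b` that all preferences of `D` respect: a
presentation of semi-hybridness in which the tree between the two parts is left open. -/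
structure GatePair {α : Type*} [Fintype α] [Nonempty α] (D : Set (Pref α)) (G : SimpleGraph α)
    (X Y : Set α) (a b : α) : Prop where
  left : HasGate G X a
  right : HasGate G Y b
  disjoint : Disjoint X Y
  respects_left : ∀ P ∈ D, RespectsGate G X a P
  respects_right : ∀ P ∈ D, RespectsGate G Y b P

section GatePair

variable {α : Type*} [Fintype α] [Nonempty α] {D : Set (Pref α)} {G T : SimpleGraph α}
  {X Y : Set α} {a b : α}

theorem GatePair.symm (h : GatePair D G X Y a b) : GatePair D G Y X b a :=
  ⟨h.right, h.left, h.disjoint.symm, h.respects_right, h.respects_left⟩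

theorem GatePair.left_mem_zone (h : GatePair D G X Y a b) : a ∈ zone X Y a b :=
  _root_.left_mem_zone b h.disjoint h.left.mem

theorem GatePair.right_mem_zone (h : GatePair D G X Y a b) : b ∈ zone X Y a b :=
  zone_comm X Y a b ▸ h.symm.left_mem_zone

theorem gatePair_of_semiHybridPref (hT : T.IsTree) (hab : DualThresholds T a b)
    (h : D ⊆ {P | SemiHybridPref T a b P}) :
    GatePair D T (sideSet T a b) (sideSet T b a) a b where
  left := hasGate_sideSet hT a b
  right := hasGate_sideSet hT b a
  disjoint := disjoint_sideSet hT.connected hab.1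
  respects_left _ hP := ((semiHybridPref_iff hT hab).1 (h hP)).1
  respects_right _ hP := ((semiHybridPref_iff hT hab).1 (h hP)).2

theorem GatePair.exists_semiHybridPref (hG : G.IsTree) (h : GatePair D G X Y a b) :
    ∃ T : SimpleGraph α, T.IsTree ∧ DualThresholds T a b ∧ D ⊆ {P | SemiHybridPref T a b P} ∧
      intv T a b = zone X Y a b := by
  obtain ⟨T, hT, hTX, hTY, hzone, hadjX, hadjY⟩ :=
    exists_isTree_zone_subset_intv hG.connected h.left h.right h.disjoint
  have hab := dualThresholds_of_zone_subset hT hTX hTY h.disjoint hzone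
  have hX : sideSet T a b = X := sideSet_eq_of_zone_subset hT hTX hTY h.disjoint hzone
  have hY : sideSet T b a = Y := sideSet_eq_of_zone_subset hT hTY hTX h.disjoint.symm
    (zone_comm X Y a b ▸ intv_comm T a b ▸ hzone)
  refine ⟨T, hT, hab, fun P hP => (semiHybridPref_iff hT hab).2 ⟨?_, ?_⟩,
    intv_eq_zone_of_zone_subset hT hTX hTY h.disjoint hzone⟩
  · exact hX.symm ▸ (h.respects_left P hP).congr hG hT h.left fun _ hx _ hy =>
      (intv_eq_intv_of_adj_imp hT hG hTX hadjX hx hy).symm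
  · exact hY.symm ▸ (h.respects_right P hP).congr hG hT h.right fun _ hx _ hy =>
      (intv_eq_intv_of_adj_imp hT hG hTY hadjY hx hy).symm

end GatePair

section ExistsSemiHybrid

variable {α : Type*} [Fintype α] [Nontrivial α] {D : Set (Pref α)}

theorem exists_dualThresholds_semiHybridPref (D : Set (Pref α)) (hG : (adjGraph D).Connected) :
    ∃ (T : SimpleGraph α) (a b : α), T.IsTree ∧ DualThresholds T a b ∧
      D ⊆ {P | SemiHybridPref T a b P} := by
  obtain ⟨G, -, hG⟩ := hG.exists_isTree_le
  obtain ⟨a, b, hab⟩ := exists_pair_ne α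
  have h : GatePair D G {a} {b} a b :=
    ⟨hasGate_singleton G a, hasGate_singleton G b, Set.disjoint_singleton.2 hab,
      fun P _ => respectsGate_singleton hG a P, fun P _ => respectsGate_singleton hG b P⟩
  obtain ⟨T, hT, hTab, hD, -⟩ := h.exists_semiHybridPref hG
  exact ⟨T, a, b, hT, hTab, hD⟩

theorem semiHybridDomain_of_forall_exists_not_semiSP (hG : (adjGraph D).Connected)
    (h : (adjGraph D).IsTree → ∀ x, ∃ P ∈ D, ¬ SemiSP (adjGraph D) x P) : SemiHybridDomain D := by
  obtain ⟨T₀, a₀, b₀, h₀⟩ := exists_dualThresholds_semiHybridPref D hG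
  obtain ⟨⟨T, a, b⟩, ⟨hT, hab, hD⟩, hmin⟩ := (measure fun t : SimpleGraph α × α × α =>
      (intv t.1 t.2.1 t.2.2).ncard).wf.has_min
    {t | t.1.IsTree ∧ DualThresholds t.1 t.2.1 t.2.2 ∧
      D ⊆ {P | SemiHybridPref t.1 t.2.1 t.2.2 P}} ⟨(T₀, a₀, b₀), h₀⟩
  refine ⟨T, a, b, hT, hab, hD, hG, ?_, fun hG x _ => h hG x⟩
  rintro ⟨T', a', b', hT', hab', hD', hlt⟩
  exact hmin (T', a', b') ⟨hT', hab', hD'⟩ (Set.ncard_lt_ncard hlt (Set.toFinite _))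

end ExistsSemiHybrid

section Transfer

variable {α : Type*} [Fintype α] [Nontrivial α] {D : Set (Pref α)} {T : SimpleGraph α}
  {X Y : Set α} {P P' : Pref α} {a b : α}

theorem TopSwap.adj_of_semiSP (h : TopSwap P P') (hT : T.IsTree) (hP : SemiSP T a P)
    (hP' : SemiSP T a P') : T.Adj (peak P) (peak P') := by
  have hpeak {P : Pref α} {s : α} (hP : SemiSP T a P) (hs : s ∈ intv T (peak P) a)
      (hs' : s ∈ intv T (peak P) (second P)) : s = peak P ∨ s = second P :=
    or_iff_not_imp_right.2 fun hne =>
      (eq_peak_or_eq_second (prefers_iff_weaklyPrefers_and_ne.1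
        ((semiSP_iff hT).1 hP s (second P) hne hs hs')).1).resolve_right hne
  have hadj {P : Pref α} (hP : SemiSP T a P) (hs : second P ∈ intv T (peak P) a) :
      T.Adj (peak P) (second P) :=
    adj_of_forall_mem_intv hT.connected (second_ne_peak P).symm fun s hs' =>
      hpeak hP (mem_intv_trans hT.connected hs hs') hs'
  obtain ⟨m, hm, hmp, hma⟩ := exists_median hT (peak P) a (second P)
  rw [h.peak_eq]
  rcases hpeak hP hm (intv_comm T _ _ ▸ hmp) with rfl | rfl
  · rw [← h.second_eq, ← h.peak_eq] at *
    exact (hadj hP' hma).symm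
  · exact hadj hP hm

theorem GatePair.hasGate_adjGraph (h : GatePair D T X Y a b) (hG : (adjGraph D).Connected) :
    HasGate (adjGraph D) X a := by
  refine (hasGate_iff hG).2 ⟨h.left.mem, fun x hx y hy hxy => ?_⟩
  obtain ⟨P, -, P', hP', hs, rfl, rfl⟩ := adjGraph_adj_iff.1 hxy
  by_contra hne
  have hbest := ((h.respects_left P' hP').2 hy).2 _ hx hne
  rw [← hs.second_eq] at hbest hne
  rcases eq_peak_or_eq_second (prefers_iff_weaklyPrefers_and_ne.1 hbest).1 with ha | ha
  · exact hy (ha ▸ h.left.mem)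
  · exact hne ha.symm

theorem GatePair.adj_of_adjGraph_adj (h : GatePair D T X Y a b) (hT : T.IsTree) {x y : α}
    (hx : x ∈ X) (hy : y ∈ X) (hxy : (adjGraph D).Adj x y) : T.Adj x y := by
  obtain ⟨P, hP, P', hP', hs, rfl, rfl⟩ := adjGraph_adj_iff.1 hxy
  exact hs.adj_of_semiSP hT ((h.respects_left P hP).1 hx) ((h.respects_left P' hP').1 hy)

theorem GatePair.to_adjGraph (h : GatePair D T X Y a b) (hT : T.IsTree)
    (hG : (adjGraph D).IsTree) : GatePair D (adjGraph D) X Y a b := by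
  have hrespects {X Y : Set α} {a b : α} (h : GatePair D T X Y a b) (P : Pref α) (hP : P ∈ D) :
      RespectsGate (adjGraph D) X a P :=
    (h.respects_left P hP).congr hT hG h.left fun _ hx _ hy =>
      (intv_eq_intv_of_adj_imp hG hT (h.hasGate_adjGraph hG.connected)
        (fun _ hx _ hy => h.adj_of_adjGraph_adj hT hx hy) hx hy).symm
  exact ⟨h.hasGate_adjGraph hG.connected, h.symm.hasGate_adjGraph hG.connected, h.disjoint,
    hrespects h, hrespects h.symm⟩

end Transfer

section Shrink

variable {V : Type*} {G : SimpleGraph V} {X W S Z : Set V} {a u v w x z : V}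

theorem HasGate.eq_of_adj_of_mem_intv (hG : G.Connected) (hX : HasGate G X a)
    (hx : x ∈ X → x = a) (hz : z ∈ X → z = a) (hxz : x ≠ z) (hxv : G.Adj x v)
    (hv : v ∈ intv G x z) (hvX : v ∈ X) : v = a := by
  by_cases hxX : x ∈ X
  · obtain rfl := hx hxX
    have hzX : z ∉ X := fun hzX => hxz (hz hzX).symm
    exact eq_of_mem_intv_of_mem_intv hG (intv_comm G x z ▸ hv)
      (intv_comm G v z ▸ hX.mem_intv v hvX z hzX)
  · exact ((hasGate_iff hG).1 hX).2 v hvX x hxX hxv.symm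

theorem HasGate.disjoint_sideSet (hG : G.IsTree) (hX : HasGate G X a) (hx : x ∈ X → x = a)
    (ha : a ∉ sideSet G x v) : Disjoint X (sideSet G x v) := by
  have hgate := hasGate_sideSet hG x v
  refine Set.disjoint_left.2 fun c hcX hc => ha ?_
  have hxX := hX.mem_of_mem_intv hG.connected hcX hX.mem (hgate.mem_intv c hc a ha)
  exact hx hxX ▸ hgate.mem

theorem HasGate.subset_sideSet (hG : G.IsTree) (hX : HasGate G X a) (hx : x ∈ X → x = a)
    (hv : v ∈ X → v = a) (hxv : x ≠ v) (ha : a ∈ sideSet G x v) : X ⊆ sideSet G x v := by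
  intro c hcX
  by_contra hc
  have hxX := hX.mem_of_mem_intv hG.connected hX.mem hcX
    ((hasGate_sideSet hG x v).mem_intv a ha c hc)
  obtain rfl := hx hxX
  exact hc (hX.mem_intv c hcX v fun hvX => hxv (hv hvX).symm)

theorem zone_ssubset (hw : w ∈ Z) (hx : x ∈ Z) (hcover : ∀ c, c ∉ W → c ∉ S → c ∈ Z)
    (hu : u ∈ Z) (huS : u ∈ S) (hux : u ≠ x) : zone W S w x ⊂ Z := by
  refine ⟨fun z hz => ?_, fun hle => hux ((hle hu).2 huS)⟩
  by_cases hzW : z ∈ W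
  · exact hz.1 hzW ▸ hw
  by_cases hzS : z ∈ S
  · exact hz.2 hzS ▸ hx
  · exact hcover z hzW hzS

end Shrink

section Minimality

variable {α : Type*} [Fintype α] [Nonempty α] {D : Set (Pref α)} {G : SimpleGraph α}
  {X Y W : Set α} {a b u v w x : α}

theorem gatePair_sideSet (hG : G.IsTree) (hx : ∀ P ∈ D, SemiSP G x P) (v : α)
    (hW : HasGate G W w) (hWP : ∀ P ∈ D, RespectsGate G W w P)
    (hdisj : Disjoint W (sideSet G x v)) : GatePair D G W (sideSet G x v) w x :=
  ⟨hW, hasGate_sideSet hG x v, hdisj, hWP,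
    fun P hP => (hx P hP).respectsGate hG (hasGate_sideSet hG x v)⟩

theorem GatePair.exists_mem_zone_semiSP (h : GatePair D G X Y a b) (hG : G.IsTree)
    (hx : ∀ P ∈ D, SemiSP G x P) : ∃ y ∈ zone X Y a b, ∀ P ∈ D, SemiSP G y P := by
  have hgate {X Y : Set α} {a b : α} (h : GatePair D G X Y a b) (hxX : x ∈ X) (P : Pref α)
      (hP : P ∈ D) : SemiSP G a P := by
    by_cases hp : peak P ∈ X
    · exact (h.respects_left P hP).1 hp
    · exact (hx P hP).of_mem_intv hG (intv_comm G x _ ▸ h.left.mem_intv x hxX _ hp)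
  by_cases hxX : x ∈ X
  · exact ⟨a, h.left_mem_zone, hgate h hxX⟩
  by_cases hxY : x ∈ Y
  · exact ⟨b, h.right_mem_zone, hgate h.symm hxY⟩
  · exact ⟨x, ⟨fun hxX' => absurd hxX' hxX, fun hxY' => absurd hxY' hxY⟩, hx⟩

theorem GatePair.exists_zone_ssubset_of_notMem (h : GatePair D G X Y a b) (hG : G.IsTree)
    (hx : ∀ P ∈ D, SemiSP G x P) (hxZ : x ∈ zone X Y a b) (hvZ : v ∈ zone X Y a b)
    (huZ : u ∈ zone X Y a b) (hxv : x ≠ v) (hux : u ≠ x) (hu : u ∈ sideSet G x v)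
    (ha : a ∉ sideSet G x v) (hb : b ∈ sideSet G x v) :
    ∃ (X' Y' : Set α) (a' b' : α), GatePair D G X' Y' a' b' ∧
      zone X' Y' a' b' ⊂ zone X Y a b := by
  refine ⟨X, _, a, x, gatePair_sideSet hG hx v h.left h.respects_left
    (h.left.disjoint_sideSet hG hxZ.1 ha),
    zone_ssubset h.left_mem_zone hxZ (fun c hcX hc => ⟨(absurd · hcX), fun hcY => ?_⟩) huZ hu hux⟩
  exact absurd (h.right.subset_sideSet hG hxZ.2 hvZ.2 hxv hb hcY) hc

theorem GatePair.exists_zone_ssubset_of_mem (h : GatePair D G X Y a b) (hG : G.IsTree)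
    (hx : ∀ P ∈ D, SemiSP G x P) (hxZ : x ∈ zone X Y a b) (hvZ : v ∈ zone X Y a b)
    (huZ : u ∈ zone X Y a b) (hxv : x ≠ v) (hux : u ≠ x) (hu : u ∈ sideSet G x v)
    (ha : a ∈ sideSet G x v) (hb : b ∈ sideSet G x v) :
    ∃ (X' Y' : Set α) (a' b' : α), GatePair D G X' Y' a' b' ∧
      zone X' Y' a' b' ⊂ zone X Y a b := by
  have hv : v ∉ sideSet G x v := fun hv => hxv (eq_of_mem_intv_self hG.connected hv)
  refine ⟨{v}, _, v, x, gatePair_sideSet hG hx v (hasGate_singleton G v)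
    (fun P _ => respectsGate_singleton hG v P) (Set.disjoint_singleton_left.2 hv),
    zone_ssubset hvZ hxZ (fun c _ hc => ⟨fun hcX => ?_, fun hcY => ?_⟩) huZ hu hux⟩
  · exact absurd (h.left.subset_sideSet hG hxZ.1 hvZ.1 hxv ha hcX) hc
  · exact absurd (h.right.subset_sideSet hG hxZ.2 hvZ.2 hxv hb hcY) hc

theorem GatePair.exists_zone_ssubset (h : GatePair D G X Y a b) (hG : G.IsTree)
    (hx : ∀ P ∈ D, SemiSP G x P) (hxZ : x ∈ zone X Y a b) (hvZ : v ∈ zone X Y a b)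
    (huZ : u ∈ zone X Y a b) (hxv : G.Adj x v) (hxu : G.Adj x u) (huv : u ≠ v) :
    ∃ (X' Y' : Set α) (a' b' : α), GatePair D G X' Y' a' b' ∧
      zone X' Y' a' b' ⊂ zone X Y a b := by
  have hu : u ∈ sideSet G x v := mem_intv_of_adj_of_adj hG hxu.symm hxv huv
  have hv : v ∈ sideSet G x u := mem_intv_of_adj_of_adj hG hxv.symm hxu huv.symm
  have hcover {c : α} (hc : c ∉ sideSet G x v) : c ∈ sideSet G x u :=
    (mem_intv_or_mem_intv hG hv c).resolve_left fun hc' => hc ((intv_comm G v c).le hc')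
  by_cases ha : a ∈ sideSet G x v <;> by_cases hb : b ∈ sideSet G x v
  · exact h.exists_zone_ssubset_of_mem hG hx hxZ hvZ huZ hxv.ne hxu.ne' hu ha hb
  · rw [zone_comm X Y a b] at *
    exact h.symm.exists_zone_ssubset_of_notMem hG hx hxZ hvZ huZ hxv.ne hxu.ne' hu hb ha
  · exact h.exists_zone_ssubset_of_notMem hG hx hxZ hvZ huZ hxv.ne hxu.ne' hu ha hb
  · exact h.exists_zone_ssubset_of_mem hG hx hxZ huZ hvZ hxu.ne hxv.ne' hv (hcover ha) (hcover hb)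

theorem GatePair.exists_adj_mem_zone (h : GatePair D G X Y a b) (hG : G.Connected)
    (hxZ : x ∈ zone X Y a b) : ∃ v ∈ zone X Y a b, G.Adj x v := by
  obtain ⟨z, hz, hxz⟩ : ∃ z ∈ zone X Y a b, x ≠ z := by
    by_cases hxa : x = a
    · exact ⟨b, h.right_mem_zone, fun hxb =>
        Set.disjoint_left.1 h.disjoint h.left.mem (hxa.symm.trans hxb ▸ h.right.mem)⟩
    · exact ⟨a, h.left_mem_zone, hxa⟩
  obtain ⟨v, hxv, hv, -⟩ := exists_adj_mem_intv_dist_lt hG hxz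
  exact ⟨v, ⟨h.left.eq_of_adj_of_mem_intv hG hxZ.1 hz.1 hxz hxv hv,
    h.right.eq_of_adj_of_mem_intv hG hxZ.2 hz.2 hxz hxv hv⟩, hxv⟩

end Minimality

theorem not_semiHybridDomain_of_semiSP {α : Type*} [Fintype α] [Nontrivial α] {D : Set (Pref α)}
    {x : α} (hG : (adjGraph D).IsTree) (hx : ∀ P ∈ D, SemiSP (adjGraph D) x P) :
    ¬ SemiHybridDomain D := by
  rintro ⟨T, a, b, hT, hab, hD, -, hmin, hleaf⟩
  have h := (gatePair_of_semiHybridPref hT hab hD).to_adjGraph hT hG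
  rw [hab.intv_eq_zone hT] at hmin hleaf
  obtain ⟨y, hyZ, hy⟩ := h.exists_mem_zone_semiSP hG hx
  obtain ⟨v, hvZ, hyv⟩ := h.exists_adj_mem_zone hG.connected hyZ
  obtain ⟨u, ⟨huZ, hyu⟩, huv⟩ :
      ∃ u, (u ∈ zone (sideSet T a b) (sideSet T b a) a b ∧ (adjGraph D).Adj y u) ∧ u ≠ v := by
    by_contra! hunique
    obtain ⟨P, hP, hnot⟩ := hleaf hG y ⟨hyZ, v, ⟨hvZ, hyv⟩, hunique⟩
    exact hnot (hy P hP)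
  obtain ⟨X', Y', a', b', h', hlt⟩ := h.exists_zone_ssubset hG hy hyZ hvZ huZ hyv hyu huv
  obtain ⟨T', hT', hab', hD', hzone⟩ := h'.exists_semiHybridPref hG
  exact hmin ⟨T', a', b', hT', hab', hD', hzone ▸ hlt⟩

theorem semiHybridDomain_iff {α : Type*} [Fintype α] [Nontrivial α] {D : Set (Pref α)}
    (hG : (adjGraph D).Connected) :
    SemiHybridDomain D ↔ ¬ ((adjGraph D).IsTree ∧ ∃ x, ∀ P ∈ D, SemiSP (adjGraph D) x P) := by
  refine ⟨fun hD ⟨hT, x, hx⟩ => not_semiHybridDomain_of_semiSP hT hx hD, fun h => ?_⟩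
  refine semiHybridDomain_of_forall_exists_not_semiSP hG fun hT x => ?_
  by_contra! hx
  exact h ⟨hT, x, hx⟩

/-! ### The projection rule -/

section ProjectionRule

theorem projOn_intv_rotate {V : Type*} [Fintype V] {T : SimpleGraph V} (hT : T.IsTree)
    (p q x : V) : projOn T (intv T p q) x = projOn T (intv T q x) p := by
  obtain ⟨h₁, h₂, h₃⟩ := (projOn_intv_eq_iff hT).1 (Eq.refl (projOn T (intv T q x) p))
  exact (projOn_intv_eq_iff hT).2 ⟨h₂, (intv_comm T p x).le h₃, (intv_comm T q x).le h₁⟩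

variable {α : Type*} [Fintype α] [Nonempty α] {T : SimpleGraph α} {D : Set (Pref α)} {P : Pref α}
  {x : α}

theorem gammaSet_fin_two (hT : T.Connected) (P : Fin 2 → Pref α) :
    gammaSet T P = intv T (peak (P 0)) (peak (P 1)) := by
  ext c
  refine ⟨?_, fun hc => ⟨0, 1, hc⟩⟩
  rintro ⟨i, j, hc⟩
  fin_cases i <;> fin_cases j
  · exact eq_of_mem_intv_self hT hc ▸ left_mem_intv T _ _
  · exact hc
  · exact intv_comm T (peak (P 1)) _ ▸ hc
  · exact eq_of_mem_intv_self hT hc ▸ right_mem_intv T _ _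

theorem SemiSP.weaklyPrefers_projOn (h : SemiSP T x P) (hT : T.IsTree) (q c : α) :
    weaklyPrefers P (projOn T (intv T (peak P) q) x) (projOn T (intv T c q) x) := by
  rw [projOn_intv_rotate hT _ q, projOn_intv_rotate hT c, weaklyPrefers_iff_eq_or_prefers,
    or_iff_not_imp_left]
  intro hne
  have hproj := projOn_spec hT q x (peak P)
  exact (semiSP_iff hT).1 h _ _ hne (hproj.2 x (right_mem_intv T q x))
    (hproj.2 _ (projOn_spec hT q x c).1)

theorem isRule_projRule (hT : T.Connected) (x : α) : IsRule D (projRule T x (n := 2)) := by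
  intro P _ a ha
  have hproj : IsProjPt T (intv T a a) x a := ⟨left_mem_intv T a a, fun b hb =>
    eq_of_mem_intv_self hT hb ▸ right_mem_intv T x b⟩
  rw [projRule, gammaSet_fin_two hT, ha, ha, projOn_eq_of_isProjPt hT hproj]

theorem topsOnly_projRule (D : Set (Pref α)) (T : SimpleGraph α) (x : α) (n : ℕ) :
    TopsOnly D (projRule T x (n := n)) := fun P P' _ _ h => by
  simp only [projRule, gammaSet, h]

theorem strategyProof_projRule (hT : T.IsTree) (h : ∀ P ∈ D, SemiSP T x P) :
    StrategyProof D (projRule T x (n := 2)) := by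
  intro P hP i Q _
  rw [← weaklyPrefers_iff_eq_or_prefers, projRule, projRule, gammaSet_fin_two hT.connected,
    gammaSet_fin_two hT.connected]
  fin_cases i
  · exact (h _ (hP 0)).weaklyPrefers_projOn hT _ _
  · rw [intv_comm T (peak (P 0)), intv_comm T (peak (Function.update P _ Q 0))]
    exact (h _ (hP 1)).weaklyPrefers_projOn hT _ _

theorem projRule_swap (hT : T.Connected) (x : α) (P Q : Pref α) :
    projRule T x ![P, Q] = projRule T x ![Q, P] := by
  simp only [projRule, gammaSet_fin_two hT]
  exact congrArg (projOn T · x) (intv_comm T _ _)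

end ProjectionRule

/-! ### Edge retractions -/

section EdgeRetraction

variable {V : Type*} {G : SimpleGraph V} {φ ψ : V → V} {a b s u v w x : V}

/-- A self-map of the vertices that either collapses or fixes pointwise each edge. In each voter's
peak separately, a strategy-proof tops-only rule is such a map of the adjacency graph. -/
def EdgeRetraction (G : SimpleGraph V) (φ : V → V) : Prop :=
  ∀ ⦃a b⦄, G.Adj a b → φ a = φ b ∨ φ a = a ∧ φ b = b

/-- A set of vertices, such as a cycle, on which each edge retraction is the identity or
constant. -/
def RetractionRigid (G : SimpleGraph V) (C : Set V) : Prop :=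
  ∀ ⦃φ⦄, EdgeRetraction G φ → (∀ a ∈ C, φ a = a) ∨ ∀ a ∈ C, ∀ b ∈ C, φ a = φ b

namespace EdgeRetraction

theorem apply_mem_support (h : EdgeRetraction G φ) (hs : φ s = s) (p : G.Walk a s) :
    φ a ∈ p.support := by
  induction p with
  | nil => simp [hs]
  | cons hadj p ih =>
    rw [SimpleGraph.Walk.support_cons, List.mem_cons]
    exact (h hadj).symm.imp And.left fun e => by rw [e]; exact ih hs

theorem apply_mem_intv (h : EdgeRetraction G φ) (hG : G.Connected) (hs : φ s = s) (a : V) :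
    φ a ∈ intv G a s :=
  mem_intv_of_forall_mem_support hG (h.apply_mem_support hs)

theorem apply_eq_of_mem_support_isPath (h : EdgeRetraction G φ) {p : G.Walk u v} (hp : p.IsPath)
    (hu : φ u = u) (hv : φ v = v) (hw : w ∈ p.support) : φ w = w := by
  obtain ⟨q, r, rfl⟩ := SimpleGraph.Walk.mem_support_iff_exists_append.1 hw
  have hq : φ w ∈ q.support := by simpa using h.apply_mem_support hu q.reverse
  have hr : φ w ∈ w :: r.support.tail := r.cons_tail_support ▸ h.apply_mem_support hv r
  rw [SimpleGraph.Walk.isPath_def, SimpleGraph.Walk.support_append] at hp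
  exact (List.mem_cons.1 hr).resolve_right (List.disjoint_of_nodup_append hp hq)

theorem apply_eq_of_apply_snd_ne (h : EdgeRetraction G φ) {c : G.Walk u u} (hc : c.IsCycle)
    (hne : φ u ≠ φ c.snd) : ∀ w ∈ c.support, φ w = w := by
  have hadj : G.Adj u c.snd := c.adj_snd hc.not_nil
  obtain ⟨hu, hsnd⟩ := (h hadj).resolve_left hne
  rw [← c.cons_tail_eq hc.not_nil]
  intro w hw
  rw [SimpleGraph.Walk.support_cons, List.mem_cons] at hw
  rcases hw with rfl | hw
  · exact hu
  · exact h.apply_eq_of_mem_support_isPath hc.isPath_tail hsnd hu hw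

theorem apply_eq_of_adj_toSubgraph (h : EdgeRetraction G φ) {c : G.Walk u u} (hc : c.IsCycle)
    (hab : c.toSubgraph.Adj a b) (hne : φ a ≠ φ b) : ∀ w ∈ c.support, φ w = w := by
  have ha : a ∈ c.support := c.mem_verts_toSubgraph.1 hab.fst_mem
  have hrot : (c.rotate a ha).IsCycle := hc.rotate ha
  have hb : b ∈ (c.rotate a ha).toSubgraph.neighborSet a := by simpa using hab
  rw [hrot.neighborSet_toSubgraph_endpoint] at hb
  suffices ∀ w ∈ (c.rotate a ha).support, φ w = w by simpa using this
  rcases hb with rfl | rfl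
  · exact h.apply_eq_of_apply_snd_ne hrot hne
  · simpa using h.apply_eq_of_apply_snd_ne hrot.reverse (by simpa using hne)

theorem apply_eq_or_apply_eq (hφ : EdgeRetraction G φ) (hψ : EdgeRetraction G ψ)
    (hx : φ x = x) (hx' : ψ x = x) (huniq : ∀ a, φ a = a → ψ a = a → a = x)
    (w : G.Walk a x) : φ a = x ∨ ψ a = x := by
  induction w with
  | nil => exact .inl hx
  | cons hab _ ih =>
    rcases hφ hab with h | h <;> rcases hψ hab with h' | h' <;> grind

end EdgeRetraction

theorem apply_eq_of_mem_support {p : G.Walk u v} (h : ∀ a b, p.toSubgraph.Adj a b → φ a = φ b)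
    (hw : w ∈ p.support) : φ w = φ u := by
  induction p with
  | nil => simp_all
  | cons hadj p ih =>
    simp only [SimpleGraph.Walk.toSubgraph, SimpleGraph.Subgraph.sup_adj] at h
    rw [SimpleGraph.Walk.support_cons, List.mem_cons] at hw
    rcases hw with rfl | hw
    · rfl
    · rw [ih (fun a b hab => h a b (.inr hab)) hw, h _ _ (.inl (.refl _))]

theorem retractionRigid_cycle {c : G.Walk u u} (hc : c.IsCycle) :
    RetractionRigid G {w | w ∈ c.support} := by
  intro φ hφ
  by_cases hcut : ∃ a b, c.toSubgraph.Adj a b ∧ φ a ≠ φ b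
  · obtain ⟨a, b, hab, hne⟩ := hcut
    exact .inl fun w hw => hφ.apply_eq_of_adj_toSubgraph hc hab hne w hw
  · push Not at hcut
    exact .inr fun a ha b hb =>
      (apply_eq_of_mem_support hcut ha).trans (apply_eq_of_mem_support hcut hb).symm

theorem exists_mem_support_ne_and_ne {c : G.Walk u u} (hc : c.IsCycle) (a b : V) :
    ∃ w ∈ {w | w ∈ c.support}, w ≠ a ∧ w ≠ b := by
  have hsnd : u ≠ c.snd := (c.adj_snd hc.not_nil).ne
  have hpen : c.penultimate ≠ u := (c.adj_penultimate hc.not_nil).ne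
  have hsnd_pen := hc.snd_ne_penultimate
  by_contra! hcover
  have h₁ : u = a ∨ u = b := or_iff_not_imp_left.2 <| hcover u c.start_mem_support
  have h₂ : c.snd = a ∨ c.snd = b := or_iff_not_imp_left.2 <|
    hcover c.snd (c.getVert_mem_support 1)
  have h₃ : c.penultimate = a ∨ c.penultimate = b := or_iff_not_imp_left.2 <|
    hcover c.penultimate (c.getVert_mem_support _)
  clear hcover
  grind

end EdgeRetraction

/-! ### Two-voter rules of the peaks -/

section PeakRule

variable {α : Type*} [Fintype α] [Nonempty α]

/-- A strategy-proof, tops-only two-voter rule on `D`, as a function of the two peaks. -/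
structure PeakRule (D : Set (Pref α)) (F : α → α → α) : Prop where
  unanimous : ∀ a, F a a = a
  left : ∀ P ∈ D, ∀ a b, weaklyPrefers P (F (peak P) b) (F a b)
  right : ∀ P ∈ D, ∀ a b, weaklyPrefers P (F b (peak P)) (F b a)

variable {D : Set (Pref α)} {F : α → α → α} {Pl Pu P : Pref α} {a b v x : α} {C : Set α}

theorem exists_peakRule_of_topsOnly {f : (Fin 2 → Pref α) → α} (hrich : MinimallyRich D)
    (hrule : IsRule D f) (htops : TopsOnly D f) (hsp : StrategyProof D f) :
    ∃ F, PeakRule D F ∧ ∀ P ∈ D, ∀ Q ∈ D, f ![P, Q] = F (peak P) (peak Q) := by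
  choose R hRD hRpeak using hrich
  have inDom {P Q : Pref α} (hP : P ∈ D) (hQ : Q ∈ D) : InDom D ![P, Q] :=
    Fin.forall_fin_two.2 ⟨hP, hQ⟩
  have hF : ∀ P ∈ D, ∀ Q ∈ D, f ![P, Q] = f ![R (peak P), R (peak Q)] := fun P hP Q hQ =>
    htops _ _ (inDom hP hQ) (inDom (hRD _) (hRD _)) (by simp [Fin.forall_fin_two, hRpeak])
  refine ⟨fun a b => f ![R a, R b], ⟨fun a => ?_, fun P hP a b => ?_, fun P hP a b => ?_⟩, hF⟩
  · exact hrule _ (inDom (hRD a) (hRD a)) a (by simp [Fin.forall_fin_two, hRpeak])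
  · have h := hsp ![P, R b] (inDom hP (hRD b)) 0 (R a) (hRD a)
    rw [← weaklyPrefers_iff_eq_or_prefers, hF P hP _ (hRD b), hRpeak] at h
    rwa [show Function.update ![P, R b] 0 (R a) = ![R a, R b] by
      funext i; fin_cases i <;> rfl] at h
  · have h := hsp ![R b, P] (inDom (hRD b) hP) 1 (R a) (hRD a)
    rw [← weaklyPrefers_iff_eq_or_prefers, hF _ (hRD b) P hP, hRpeak] at h
    rwa [show Function.update ![R b, P] 1 (R a) = ![R b, R a] by
      funext i; fin_cases i <;> rfl] at h

namespace PeakRule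

theorem swap (h : PeakRule D F) : PeakRule D fun a b => F b a :=
  ⟨h.unanimous, h.right, h.left⟩

theorem idem (h : PeakRule D F) (hrich : MinimallyRich D) (a b : α) :
    F (F a b) b = F a b := by
  obtain ⟨P, hP, hpeak⟩ := hrich (F a b)
  have hle := h.left P hP a b
  rw [hpeak] at hle
  nth_rw 2 [← hpeak] at hle
  exact (eq_peak_of_weaklyPrefers hle).trans hpeak

/-- Both of the completely reversed preferences rank `x` weakly above `v`. -/
theorem eq_of_fixed_of_reversed (h : PeakRule D F) (hPl : Pl ∈ D) (hPu : Pu ∈ D)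
    (hrev : Reversed Pl Pu) (hx : F (peak Pl) (peak Pu) = x) (hx' : F (peak Pu) (peak Pl) = x)
    (hl : F v (peak Pl) = v) (hu : F v (peak Pu) = v) : v = x := by
  have hxl := h.left Pl hPl v (peak Pu)
  have hxu := h.left Pu hPu v (peak Pl)
  rw [hx, hu] at hxl
  rw [hx', hl] at hxu
  by_contra hne
  have hPl_lt := prefers_iff_weaklyPrefers_and_ne.2 ⟨hxl, Ne.symm hne⟩
  exact hne (weaklyPrefers_iff_eq_or_prefers.2 (.inr ((hrev x v).1 hPl_lt)) |>.antisymm hxu)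

variable [Nontrivial α]

theorem edgeRetraction (h : PeakRule D F) (b : α) : EdgeRetraction (adjGraph D) (F · b) := by
  intro x y hxy
  obtain ⟨P, hP, P', hP', hswap, rfl, rfl⟩ := adjGraph_adj_iff.1 hxy
  exact hswap.eq_or_eq_peaks (h.left P hP _ b) (h.left P' hP' _ b)

theorem apply_eq_of_invariant (h : PeakRule D F) (hG : (adjGraph D).Connected) (hPl : Pl ∈ D)
    (hPu : Pu ∈ D) (hrev : Reversed Pl Pu) (hx : F (peak Pl) (peak Pu) = x)
    (hx' : F (peak Pu) (peak Pl) = x) (a : α) : F a x = x := by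
  have hrich := minimallyRich_of_connected hG
  have hxl : F x (peak Pl) = x := hx' ▸ h.idem hrich _ _
  have hxu : F x (peak Pu) = x := hx ▸ h.idem hrich _ _
  obtain ⟨w⟩ := hG.preconnected a x
  have hreach := (h.edgeRetraction (peak Pl)).apply_eq_or_apply_eq (h.edgeRetraction (peak Pu))
    hxl hxu (fun v => h.eq_of_fixed_of_reversed hPl hPu hrev hx hx') w
  rcases hreach with hax | hax
  · simpa only [hax] using h.swap.idem hrich (peak Pl) a
  · simpa only [hax] using h.swap.idem hrich (peak Pu) a

theorem false_of_forall_mem_apply_eq (h : PeakRule D F) (hG : (adjGraph D).Connected)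
    (hC : RetractionRigid (adjGraph D) C) (hcard : ∀ a b, ∃ c ∈ C, c ≠ a ∧ c ≠ b)
    (hx : ∀ a, F a x = x) (hb : ∀ a ∈ C, F a b = a) : False := by
  obtain ⟨w⟩ := hG.preconnected b x
  induction w with
  | @nil x =>
    obtain ⟨c, hc, hne, _⟩ := hcard x x
    exact hne ((hb c hc).symm.trans (hx c))
  | @cons b b' _ hbb' _ ih =>
    refine ih hx ((hC (h.edgeRetraction b')).resolve_right fun hconst => ?_)
    have hfix : ∀ a ∈ C, a ≠ b → F a b' = a := fun a ha hne => by
      rcases h.swap.edgeRetraction a hbb' with hcol | ⟨hfix, _⟩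
      · exact hcol.symm.trans (hb a ha)
      · exact absurd ((hb a ha).symm.trans hfix) hne
    obtain ⟨c, hc, hcb, _⟩ := hcard b b
    obtain ⟨d, hd, hdb, hdc⟩ := hcard b c
    exact hdc (by rw [← hfix d hd hdb, ← hfix c hc hcb, hconst d hd c hc])

theorem isTree (h : PeakRule D F) (hG : (adjGraph D).Connected) (hx : ∀ a, F a x = x)
    (hx' : ∀ a, F x a = x) : (adjGraph D).IsTree := by
  refine ⟨hG, fun c w hw => ?_⟩
  have hC := retractionRigid_cycle hw
  have hcard := exists_mem_support_ne_and_ne hw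
  have hc : c ∈ {v | v ∈ w.support} := w.start_mem_support
  obtain ⟨d, hd, hdc, _⟩ := hcard c c
  rcases hC (h.edgeRetraction c) with hid | hconst
  · exact h.false_of_forall_mem_apply_eq hG hC hcard hx hid
  have hdc_eq : F d c = c := (hconst d hd c hc).trans (h.unanimous c)
  rcases hC (h.swap.edgeRetraction d) with hid | hconst'
  · exact h.swap.false_of_forall_mem_apply_eq hG hC hcard hx' hid
  · exact hdc ((h.unanimous d).symm.trans ((hconst' d hd c hc).trans hdc_eq))

theorem apply_eq_projOn (h : PeakRule D F) (hG : (adjGraph D).IsTree) (hx : ∀ a, F a x = x)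
    (hx' : ∀ a, F x a = x) (a b : α) : F a b = projOn (adjGraph D) (intv (adjGraph D) a x) b :=
  ((projOn_intv_eq_iff hG).2
    ⟨(h.edgeRetraction b).apply_mem_intv hG.connected (hx' b) a,
      (h.swap.edgeRetraction a).apply_mem_intv hG.connected (h.unanimous a) b,
      (h.swap.edgeRetraction a).apply_mem_intv hG.connected (hx a) b⟩).symm

theorem semiSP (h : PeakRule D F) (hG : (adjGraph D).IsTree) (hx : ∀ a, F a x = x)
    (hx' : ∀ a, F x a = x) (hP : P ∈ D) : SemiSP (adjGraph D) x P := by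
  set T := adjGraph D
  have apply_of_mem {p c : α} (hc : c ∈ intv T p x) : F p c = c :=
    (h.apply_eq_projOn hG hx hx' p c).trans <|
      (projOn_intv_eq_iff hG).2 ⟨hc, left_mem_intv T c p, left_mem_intv T c x⟩
  refine ⟨fun c d hc hd hne hcd => prefers_iff_weaklyPrefers_and_ne.2 ⟨?_, hne⟩, fun c hc => ?_⟩
  · have hFdc : F d c = d := by
      rw [h.apply_eq_projOn hG hx hx', projOn_intv_eq_iff hG]
      exact ⟨left_mem_intv T d x, right_mem_intv T c d, mem_intv_of_mem_left hG.connected hd hcd⟩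
    simpa only [apply_of_mem hc, hFdc] using h.left P hP d c
  · have hproj := h.apply_eq_projOn hG hx hx' (peak P) c
    refine prefers_iff_weaklyPrefers_and_ne.2 ⟨?_, fun heq => hc ?_⟩
    · rw [← hproj]
      simpa only [h.unanimous] using h.left P hP c c
    · exact heq ▸ (projOn_spec hG (peak P) x c).1

end PeakRule

theorem isTree_and_exists_semiSP_of_invariant [Nontrivial α] {f : (Fin 2 → Pref α) → α}
    (hG : (adjGraph D).Connected) (hPl : Pl ∈ D) (hPu : Pu ∈ D) (hrev : Reversed Pl Pu)
    (hrule : IsRule D f) (htops : TopsOnly D f) (hsp : StrategyProof D f)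
    (hinv : f ![Pl, Pu] = f ![Pu, Pl]) :
    (adjGraph D).IsTree ∧ ∃ x, ∀ P ∈ D, SemiSP (adjGraph D) x P := by
  obtain ⟨F, hF, hfF⟩ := exists_peakRule_of_topsOnly (minimallyRich_of_connected hG) hrule htops hsp
  rw [hfF Pl hPl Pu hPu, hfF Pu hPu Pl hPl] at hinv
  have hx := hF.apply_eq_of_invariant hG hPl hPu hrev rfl hinv.symm
  have hx' := hF.swap.apply_eq_of_invariant hG hPl hPu hrev hinv.symm rfl
  have hT := hF.isTree hG hx hx'
  exact ⟨hT, _, fun P hP => hF.semiSP hT hx hx' hP⟩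

theorem exists_invariant_iff [Nontrivial α] (hG : (adjGraph D).Connected) (hPl : Pl ∈ D)
    (hPu : Pu ∈ D) (hrev : Reversed Pl Pu) :
    (∃ f : (Fin 2 → Pref α) → α,
        IsRule D f ∧ TopsOnly D f ∧ StrategyProof D f ∧ f ![Pl, Pu] = f ![Pu, Pl]) ↔
      (adjGraph D).IsTree ∧ ∃ x, ∀ P ∈ D, SemiSP (adjGraph D) x P := by
  constructor
  · rintro ⟨f, hrule, htops, hsp, hinv⟩
    exact isTree_and_exists_semiSP_of_invariant hG hPl hPu hrev hrule htops hsp hinv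
  · rintro ⟨hT, x, hx⟩
    exact ⟨projRule (adjGraph D) x, isRule_projRule hG x, topsOnly_projRule D _ x 2,
      strategyProof_projRule hT hx, projRule_swap hG x Pl Pu⟩

end PeakRule

/-! ### Strategy-proof two-voter rules -/

section TwoVoterRule

variable {α : Type*} [Fintype α] [Nonempty α] {D : Set (Pref α)} {g : Pref α → Pref α → α}
  {P P₀ Q Q₀ : Pref α} {a b c x y z : α}

/-- A strategy-proof two-voter rule on `D`, curried. -/
structure TwoVoterRule (D : Set (Pref α)) (g : Pref α → Pref α → α) : Prop where
  unanimous : ∀ P ∈ D, ∀ Q ∈ D, peak P = peak Q → g P Q = peak P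
  left : ∀ P ∈ D, ∀ P' ∈ D, ∀ Q ∈ D, weaklyPrefers P (g P Q) (g P' Q)
  right : ∀ P ∈ D, ∀ Q ∈ D, ∀ Q' ∈ D, weaklyPrefers Q (g P Q) (g P Q')

/-- The first voter is decisive for `a` against `b`: she gets her peak `a` whenever the second
voter's peak is `b`. -/
def Decides (D : Set (Pref α)) (g : Pref α → Pref α → α) (a b : α) : Prop :=
  ∀ P ∈ D, peak P = a → ∀ Q ∈ D, peak Q = b → g P Q = a

/-- Each of `a` and `b` is ranked second in some preference with the other as its peak: a weakening
of adjacency that suffices to pass on decisiveness. -/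
def MutualSeconds (D : Set (Pref α)) (a b : α) : Prop :=
  b ∈ secondsSet D a ∧ a ∈ secondsSet D b

theorem MutualSeconds.symm (h : MutualSeconds D a b) : MutualSeconds D b a := ⟨h.2, h.1⟩

namespace TwoVoterRule

theorem swap (h : TwoVoterRule D g) : TwoVoterRule D (flip g) where
  unanimous P hP Q hQ hpeak := (h.unanimous Q hQ P hP hpeak.symm).trans hpeak.symm
  left P hP P' hP' Q hQ := h.right Q hQ P hP P' hP'
  right P hP Q hQ Q' hQ' := h.left Q hQ Q' hQ' P hP

theorem decides_self (h : TwoVoterRule D g) (a : α) : Decides D g a a :=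
  fun P hP hPa Q hQ hQa => (h.unanimous P hP Q hQ (hPa.trans hQa.symm)).trans hPa

end TwoVoterRule

variable [Nontrivial α]

theorem MutualSeconds.ne (h : MutualSeconds D a b) : a ≠ b := by
  obtain ⟨⟨P, -, rfl, rfl⟩, -⟩ := h
  exact (second_ne_peak P).symm

theorem mutualSeconds_of_adj (h : (adjGraph D).Adj a b) : MutualSeconds D a b := by
  obtain ⟨P, hP, P', hP', hswap, rfl, rfl⟩ := adjGraph_adj_iff.1 h
  exact ⟨⟨P, hP, rfl, hswap.peak_eq.symm⟩, ⟨P', hP', rfl, hswap.second_eq⟩⟩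

namespace TwoVoterRule

theorem decides_of_apply_eq (h : TwoVoterRule D g) (hP₀ : P₀ ∈ D) (hQ₀ : Q₀ ∈ D)
    (hpeak : peak Q₀ = second P₀) (heq : g P₀ Q₀ = peak P₀)
    (hy : ∀ Q ∈ D, peak Q = y → g Q₀ Q = second P₀) : Decides D g (peak P₀) y := by
  intro P hP hPpeak Q hQ hQy
  have hne : g P₀ Q ≠ second P₀ := fun hsecond => by
    have hle := h.right P₀ hP₀ Q₀ hQ₀ Q hQ
    rw [heq, hsecond, ← hpeak] at hle
    exact second_ne_peak P₀ (hpeak.symm.trans (eq_peak_of_weaklyPrefers hle).symm)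
  have hP₀Q : g P₀ Q = peak P₀ :=
    (eq_peak_or_eq_second (hy Q hQ hQy ▸ h.left P₀ hP₀ Q₀ hQ₀ Q hQ)).resolve_right hne
  have hle := h.left P hP P₀ hP₀ Q hQ
  rw [hP₀Q, ← hPpeak] at hle
  exact (eq_peak_of_weaklyPrefers hle).trans hPpeak

theorem decides_or_decides (h : TwoVoterRule D g) (hab : MutualSeconds D a b) :
    Decides D g a b ∨ Decides D (flip g) b a := by
  obtain ⟨⟨P, hP, rfl, rfl⟩, ⟨Q, hQ, hQpeak, hQsecond⟩⟩ := hab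
  have hPQ : weaklyPrefers P (g P Q) (second P) := by
    simpa only [h.unanimous Q hQ Q hQ rfl, hQpeak] using h.left P hP Q hQ Q hQ
  rcases eq_peak_or_eq_second hPQ with heq | heq
  · exact .inl <| h.decides_of_apply_eq hP hQ hQpeak heq fun Q' hQ' hQ'peak =>
      (h.unanimous Q hQ Q' hQ' (hQpeak.trans hQ'peak.symm)).trans hQpeak
  · rw [← hQpeak, ← hQsecond]
    exact .inr <| h.swap.decides_of_apply_eq hQ hP hQsecond.symm (heq.trans hQpeak.symm)
      fun P' hP' hP'peak =>
        (h.unanimous P' hP' P hP (hP'peak.trans hQsecond)).trans hP'peak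

theorem decides_trans (h : TwoVoterRule D g) (hab : MutualSeconds D a b) (hdab : Decides D g a b)
    (hdby : Decides D g b y) : Decides D g a y := by
  obtain ⟨⟨P, hP, rfl, rfl⟩, ⟨Q, hQ, hQpeak, _⟩⟩ := hab
  exact h.decides_of_apply_eq hP hQ hQpeak (hdab P hP rfl Q hQ hQpeak) (hdby Q hQ hQpeak)

theorem decides_of_adj (h : TwoVoterRule D g) (hab : MutualSeconds D a b)
    (hbc : (adjGraph D).Adj b c) (hac : a ≠ c) (hdab : Decides D g a b) : Decides D g b c := by
  refine (h.decides_or_decides (mutualSeconds_of_adj hbc)).resolve_right fun hdcb => ?_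
  have hne := hab.ne
  obtain ⟨⟨P, hP, hPpeak, -⟩, ⟨P', hP', hP'peak, hP'second⟩⟩ := hab
  obtain ⟨Q, hQ, Q', hQ', hswap, rfl, rfl⟩ := adjGraph_adj_iff.1 hbc
  have hPQ : g P Q = a := hdab P hP hPpeak Q hQ rfl
  have hPQ' : g P Q' = a := by
    rcases hswap.eq_or_eq_peaks (h.right P hP Q hQ Q' hQ') (h.right P hP Q' hQ' Q hQ) with
      heq | ⟨heq, -⟩
    · exact heq.symm.trans hPQ
    · exact absurd (hPQ.symm.trans heq) hne
  have hP'Q' : g P' Q' = peak Q' := hdcb Q' hQ' rfl P' hP' hP'peak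
  have hle := h.left P' hP' P hP Q' hQ'
  rw [hPQ', hP'Q', ← hP'second] at hle
  rcases eq_peak_or_eq_second hle with heq | heq
  · exact hbc.ne (hP'peak.symm.trans heq.symm)
  · exact hac (hP'second.symm.trans heq.symm)

theorem decides_of_mutualSeconds (h : TwoVoterRule D g) (hab : (adjGraph D).Adj a b)
    (hbc : MutualSeconds D b c) (hac : a ≠ c) (hdab : Decides D g a b) : Decides D g b c := by
  refine (h.decides_or_decides hbc).resolve_right fun hdcb => ?_
  have hdba := h.swap.decides_of_adj hbc.symm hab.symm hac.symm hdcb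
  obtain ⟨P, hP, P', hP', -, hPpeak, hP'peak⟩ := adjGraph_adj_iff.1 hab
  exact hab.ne ((hdab P hP hPpeak P' hP' hP'peak).symm.trans (hdba P' hP' hP'peak P hP hPpeak))

theorem decides_end_of_isPath (h : TwoVoterRule D g) {p : (adjGraph D).Walk z y} (hp : p.IsPath)
    (ha : a ∉ p.support) (haz : MutualSeconds D a z) (hdaz : Decides D g a z) :
    Decides D g z y := by
  induction p generalizing a with
  | nil => exact h.decides_self _
  | cons hadj p ih =>
    rw [SimpleGraph.Walk.cons_isPath_iff] at hp
    rw [SimpleGraph.Walk.support_cons, List.mem_cons, not_or] at ha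
    have hne : a ≠ _ := fun heq => ha.2 (heq ▸ p.start_mem_support)
    have hd := h.decides_of_adj haz hadj hne hdaz
    have hmut := mutualSeconds_of_adj hadj
    exact h.decides_trans hmut hd (ih hp.1 hp.2 hmut hd)

theorem decides_symm_of_detour (h : TwoVoterRule D g) (hab : (adjGraph D).Adj a b)
    (hdab : Decides D g a b) (hbz : MutualSeconds D b z) (haz : a ≠ z)
    (w : (adjGraph D).Walk z a) (hb : b ∉ w.support) : Decides D g b a := by
  have hdbz := h.decides_of_mutualSeconds hab hbz haz hdab
  exact h.decides_trans hbz hdbz <| h.decides_end_of_isPath w.bypass_isPath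
    (fun hmem => hb (w.support_bypass_subset_support hmem)) hbz hdbz

theorem exists_adj_ne_of_not_decides (h : TwoVoterRule D g) (hG : (adjGraph D).Connected)
    (hleaf : LeafSymmetry D) (hsec : ∀ x, (secondsSet D x).Nontrivial)
    (hab : (adjGraph D).Adj a b) (hdab : Decides D g a b) (hnd : ¬ Decides D g b a) :
    ∃ c, (adjGraph D).Adj b c ∧ a ≠ c := by
  by_contra! hb_leaf
  obtain ⟨z, hbz, hnadj, hzb⟩ := hleaf b ⟨a, hab.symm, fun c hbc => (hb_leaf c hbc).symm⟩ (hsec b)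
  have haz : a ≠ z := by rintro rfl; exact hnadj hab.symm
  obtain ⟨w, hw⟩ := (hG.preconnected b z).exists_isPath
  cases w with
  | nil => exact (MutualSeconds.ne ⟨hbz, hzb⟩) rfl
  | cons hadj w =>
    obtain rfl := hb_leaf _ hadj
    rw [SimpleGraph.Walk.cons_isPath_iff] at hw
    exact hnd (h.decides_symm_of_detour hab hdab ⟨hbz, hzb⟩ haz w.reverse (by simpa using hw.2))

theorem exists_isPath_of_not_decides (h : TwoVoterRule D g) (hG : (adjGraph D).Connected)
    (hleaf : LeafSymmetry D) (hsec : ∀ x, (secondsSet D x).Nontrivial)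
    (hab : (adjGraph D).Adj a b) (hdab : Decides D g a b) (hnd : ¬ Decides D g b a) (n : ℕ) :
    ∃ (b' a' v : α) (p : (adjGraph D).Walk a' v), p.IsPath ∧ p.length = n ∧ b' ∉ p.support ∧
      (adjGraph D).Adj a' b' ∧ Decides D g a' b' ∧ ¬ Decides D g b' a' := by
  induction n with
  | zero => exact ⟨b, a, a, .nil, .nil, rfl, by simpa using hab.ne', hab, hdab, hnd⟩
  | succ n ih =>
    obtain ⟨b, a, v, p, hp, hlen, hb, hab, hdab, hnd⟩ := ih
    obtain ⟨c, hbc, hac⟩ := h.exists_adj_ne_of_not_decides hG hleaf hsec hab hdab hnd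
    have hmut := mutualSeconds_of_adj hbc
    have hc : c ∉ p.support := fun hc =>
      hnd (h.decides_symm_of_detour hab hdab hmut hac (p.takeUntil c hc).reverse fun hmem =>
        hb (p.support_takeUntil_subset_support hc (by simpa using hmem)))
    refine ⟨c, b, v, .cons hab.symm p, hp.cons hb, by simp [hlen], by simp [hbc.ne', hc], hbc,
      h.decides_of_adj (mutualSeconds_of_adj hab) hbc hac hdab, fun hdcb => hnd ?_⟩
    exact h.decides_of_adj hmut.symm hab.symm hac.symm hdcb

theorem decides_symm (h : TwoVoterRule D g) (hG : (adjGraph D).Connected)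
    (hleaf : LeafSymmetry D) (hsec : ∀ x, (secondsSet D x).Nontrivial)
    (hab : (adjGraph D).Adj a b) (hdab : Decides D g a b) : Decides D g b a := by
  by_contra hnd
  obtain ⟨_, _, _, p, hp, hlen, -⟩ :=
    h.exists_isPath_of_not_decides hG hleaf hsec hab hdab hnd (Fintype.card α)
  exact hp.length_lt.ne hlen

theorem apply_eq_peak_of_decides (h : TwoVoterRule D g) (hG : (adjGraph D).Connected)
    (hleaf : LeafSymmetry D) (hsec : ∀ x, (secondsSet D x).Nontrivial)
    (hab : (adjGraph D).Adj a b) (hdab : Decides D g a b) : ∀ P ∈ D, ∀ Q ∈ D, g P Q = peak P := by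
  have decides_next {x y : α} (hxy : (adjGraph D).Adj x y) (hd : Decides D g x y) :
      ∀ z, (adjGraph D).Adj y z → Decides D g y z := fun z hyz => by
    rcases eq_or_ne x z with rfl | hne
    · exact h.decides_symm hG hleaf hsec hxy hd
    · exact h.decides_of_adj (mutualSeconds_of_adj hxy) hyz hne hd
  have decides_adj {x y : α} (w : (adjGraph D).Walk x y)
      (hx : ∀ z, (adjGraph D).Adj x z → Decides D g x z) :
      ∀ z, (adjGraph D).Adj y z → Decides D g y z := by
    induction w with
    | nil => exact hx
    | cons hadj _ ih => exact ih (decides_next hadj (hx _ hadj))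
  intro P hP Q hQ
  obtain ⟨w⟩ := hG.preconnected (peak P) (peak Q)
  suffices ∀ {x y} (_ : (adjGraph D).Walk x y), Decides D g x y from this w P hP rfl Q hQ rfl
  intro x y w
  induction w with
  | nil => exact h.decides_self _
  | @cons x _ _ hadj _ ih =>
    obtain ⟨v⟩ := hG.preconnected b x
    have hd := decides_adj v (decides_next hab hdab) _ hadj
    exact h.decides_trans (mutualSeconds_of_adj hadj) hd ih

theorem dictatorial (h : TwoVoterRule D g) (hG : (adjGraph D).Connected)
    (hleaf : LeafSymmetry D) (hsec : ∀ x, (secondsSet D x).Nontrivial) :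
    (∀ P ∈ D, ∀ Q ∈ D, g P Q = peak P) ∨ ∀ P ∈ D, ∀ Q ∈ D, g P Q = peak Q := by
  obtain ⟨b, hab⟩ := hG.preconnected.exists_adj_of_nontrivial (Classical.arbitrary α)
  rcases h.decides_or_decides (mutualSeconds_of_adj hab) with hd | hd
  · exact .inl (h.apply_eq_peak_of_decides hG hleaf hsec hab hd)
  · exact .inr fun P hP Q hQ =>
      h.swap.apply_eq_peak_of_decides hG hleaf hsec hab.symm hd Q hQ P hP

end TwoVoterRule

end TwoVoterRule

/-! ### From two voters to many -/

section ManyVoters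

variable {α : Type*} [Fintype α] {D : Set (Pref α)} {n : ℕ} {P Q : Pref α}

theorem inDom_cons {R : Fin n → Pref α} (hP : P ∈ D) (hR : InDom D R) :
    InDom D (Fin.cons P R : Fin (n + 1) → Pref α) :=
  Fin.cases hP hR

theorem inDom_update {R : Fin n → Pref α} (hR : InDom D R) (hQ : Q ∈ D) (i : Fin n) :
    InDom D (Function.update R i Q) :=
  (Function.forall_update_iff R fun _ P => P ∈ D).2 ⟨hQ, fun j _ => hR j⟩

theorem cons_cons_tail_tail {β : Type*} (S : Fin (n + 2) → β) :
    (Fin.cons (S 0) (Fin.cons (S 1) (Fin.tail (Fin.tail S))) : Fin (n + 2) → β) = S := by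
  rw [show S 1 = Fin.tail S 0 from rfl, Fin.cons_self_tail, Fin.cons_self_tail]

/-- The rule with one voter fewer in which the first voter also casts the second vote. -/
def mergeFirst (f : (Fin (n + 2) → Pref α) → α) (S : Fin (n + 1) → Pref α) : α :=
  f (Fin.cons (S 0) S)

theorem IsRule.mergeFirst [Nonempty α] {f : (Fin (n + 2) → Pref α) → α} (hf : IsRule D f) :
    IsRule D (mergeFirst f) := fun _ hS a ha =>
  hf _ (inDom_cons (hS 0) hS) a (Fin.cases (ha 0) ha)

namespace StrategyProof

theorem weaklyPrefers_cons {f : (Fin (n + 1) → Pref α) → α} (hf : StrategyProof D f) (hP : P ∈ D)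
    (hQ : Q ∈ D) {R : Fin n → Pref α} (hR : InDom D R) :
    weaklyPrefers P (f (Fin.cons P R)) (f (Fin.cons Q R)) := by
  simpa only [Fin.update_cons_zero, Fin.cons_zero, ← weaklyPrefers_iff_eq_or_prefers]
    using hf _ (inDom_cons hP hR) 0 Q hQ

theorem weaklyPrefers_cons_update {f : (Fin (n + 1) → Pref α) → α} (hf : StrategyProof D f)
    (hP : P ∈ D) (hQ : Q ∈ D) {R : Fin n → Pref α} (hR : InDom D R) (i : Fin n) :
    weaklyPrefers (R i) (f (Fin.cons P R)) (f (Fin.cons P (Function.update R i Q))) := by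
  simpa only [← Fin.cons_update, Fin.cons_succ, ← weaklyPrefers_iff_eq_or_prefers]
    using hf _ (inDom_cons hP hR) i.succ Q hQ

variable {f : (Fin (n + 2) → Pref α) → α} {R R' : Fin n → Pref α}

theorem mergeFirst (hf : StrategyProof D f) : StrategyProof D (mergeFirst f) := by
  intro S hS i Q hQ
  rw [← weaklyPrefers_iff_eq_or_prefers, _root_.mergeFirst, _root_.mergeFirst]
  rcases eq_or_ne i 0 with rfl | hi
  · rw [Function.update_self]
    exact (hf.weaklyPrefers_cons (hS 0) hQ hS).trans (hf.weaklyPrefers_cons_update hQ hQ hS 0)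
  · rw [Function.update_of_ne hi.symm]
    exact hf.weaklyPrefers_cons_update (hS 0) hQ hS i

theorem weaklyPrefers_cons_cons (hf : StrategyProof D f) {Q' : Pref α} (hP : P ∈ D) (hQ : Q ∈ D)
    (hQ' : Q' ∈ D) (hR : InDom D R) :
    weaklyPrefers Q (f (Fin.cons P (Fin.cons Q R))) (f (Fin.cons P (Fin.cons Q' R))) := by
  simpa only [Fin.update_cons_zero, Fin.cons_zero]
    using hf.weaklyPrefers_cons_update hP hQ' (inDom_cons hQ hR) 0

theorem apply_cons_cons_eq (hf : StrategyProof D f) (hP : P ∈ D) (hQ : Q ∈ D) (hR : InDom D R)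
    (h : f (Fin.cons P (Fin.cons P R)) = f (Fin.cons Q (Fin.cons Q R))) :
    f (Fin.cons P (Fin.cons Q R)) = f (Fin.cons P (Fin.cons P R)) :=
  (h ▸ hf.weaklyPrefers_cons hP hQ (inDom_cons hQ hR)).antisymm
    (hf.weaklyPrefers_cons_cons hP hP hQ hR)

theorem twoVoterRule [Nonempty α] (hf : StrategyProof D f) (hR : InDom D R)
    (hmerged : ∀ P ∈ D, f (Fin.cons P (Fin.cons P R)) = peak P) :
    TwoVoterRule D fun P Q => f (Fin.cons P (Fin.cons Q R)) where
  unanimous P hP Q hQ hpeak := by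
    have hle := hf.weaklyPrefers_cons hP hQ (inDom_cons hQ hR)
    rw [hmerged Q hQ, ← hpeak] at hle
    exact eq_peak_of_weaklyPrefers hle
  left _ hP _ hP' _ hQ := hf.weaklyPrefers_cons hP hP' (inDom_cons hQ hR)
  right _ hP _ hQ _ hQ' := hf.weaklyPrefers_cons_cons hP hQ hQ' hR

variable [Nontrivial α]

theorem not_forall_eq_second_peak_of_update (hf : StrategyProof D f) (hrich : MinimallyRich D)
    (hR : InDom D R) (hQ : Q ∈ D) (i : Fin n)
    (hfirst : ∀ P ∈ D, ∀ P' ∈ D, f (Fin.cons P (Fin.cons P' R)) = peak P) :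
    ¬ ∀ P ∈ D, ∀ P' ∈ D, f (Fin.cons P (Fin.cons P' (Function.update R i Q))) = peak P' := by
  intro hsecond
  obtain ⟨P, hP, hPpeak⟩ := hrich (second (R i))
  obtain ⟨P', hP', hP'peak⟩ := hrich (peak (R i))
  have hle := hf.weaklyPrefers_cons_update hP hQ (inDom_cons hP' hR) i.succ
  rw [← Fin.cons_update, hfirst P hP P' hP', hsecond P hP P' hP', hPpeak, hP'peak] at hle
  exact second_ne_peak (R i) (eq_peak_of_weaklyPrefers hle)

theorem forall_eq_first_peak (hf : StrategyProof D f) (hrich : MinimallyRich D)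
    (hdict : ∀ R, InDom D R → (∀ P ∈ D, ∀ P' ∈ D, f (Fin.cons P (Fin.cons P' R)) = peak P) ∨
      ∀ P ∈ D, ∀ P' ∈ D, f (Fin.cons P (Fin.cons P' R)) = peak P')
    (hR : InDom D R) (hR' : InDom D R')
    (hfirst : ∀ P ∈ D, ∀ P' ∈ D, f (Fin.cons P (Fin.cons P' R)) = peak P) :
    ∀ P ∈ D, ∀ P' ∈ D, f (Fin.cons P (Fin.cons P' R')) = peak P := by
  suffices ∀ s : Finset (Fin n), InDom D (s.piecewise R' R) ∧
      ∀ P ∈ D, ∀ P' ∈ D, f (Fin.cons P (Fin.cons P' (s.piecewise R' R))) = peak P by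
    simpa only [Finset.piecewise_univ] using (this Finset.univ).2
  intro s
  induction s using Finset.induction_on with
  | empty => simpa only [Finset.piecewise_empty] using ⟨hR, hfirst⟩
  | insert i s _ ih =>
    rw [Finset.piecewise_insert]
    have hdom := inDom_update ih.1 (hR' i) i
    exact ⟨hdom, (hdict _ hdom).resolve_right <|
      hf.not_forall_eq_second_peak_of_update hrich ih.1 (hR' i) i ih.2⟩

theorem dictatorship_of_cons_cons (hf : StrategyProof D f) (hrich : MinimallyRich D)
    (hdict : ∀ R, InDom D R → (∀ P ∈ D, ∀ P' ∈ D, f (Fin.cons P (Fin.cons P' R)) = peak P) ∨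
      ∀ P ∈ D, ∀ P' ∈ D, f (Fin.cons P (Fin.cons P' R)) = peak P') :
    Dictatorship D f := by
  by_cases hex : ∃ R, InDom D R ∧ ∀ P ∈ D, ∀ P' ∈ D, f (Fin.cons P (Fin.cons P' R)) = peak P
  · obtain ⟨R, hR, hfirst⟩ := hex
    refine ⟨0, fun S hS _ => ?_⟩
    rw [← cons_cons_tail_tail S]
    exact hf.forall_eq_first_peak hrich hdict hR (fun i => hS i.succ.succ) hfirst _ (hS 0) _ (hS 1)
  · refine ⟨1, fun S hS _ => ?_⟩
    have hR : InDom D (Fin.tail (Fin.tail S)) := fun i => hS i.succ.succ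
    rw [← cons_cons_tail_tail S]
    exact (hdict _ hR).resolve_left (fun hfirst => hex ⟨_, hR, hfirst⟩) _ (hS 0) _ (hS 1)

/-- If the merged voter dictates, the two voters she stands for face a two-voter rule at each
profile of the others; otherwise the dictator of the merged rule keeps dictating. -/
theorem dictatorship_of_mergeFirst (hf : StrategyProof D f) (hrich : MinimallyRich D)
    (htwo : ∀ g, TwoVoterRule D g →
      (∀ P ∈ D, ∀ Q ∈ D, g P Q = peak P) ∨ ∀ P ∈ D, ∀ Q ∈ D, g P Q = peak Q)
    (hmerged : Dictatorship D (_root_.mergeFirst f)) : Dictatorship D f := by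
  obtain ⟨i, hi⟩ := hmerged
  have hmerged {P R} (hP : P ∈ D) (hR : InDom D R) :
      f (Fin.cons P (Fin.cons P R)) = peak ((Fin.cons P R : Fin (n + 1) → Pref α) i) :=
    hi (Fin.cons P R) (inDom_cons hP hR) fun _ => trivial
  cases i using Fin.cases with
  | zero =>
    exact hf.dictatorship_of_cons_cons hrich fun R hR =>
      htwo _ (hf.twoVoterRule hR fun P hP => hmerged hP hR)
  | succ i =>
    refine ⟨i.succ.succ, fun S hS _ => ?_⟩
    have hR : InDom D (Fin.tail (Fin.tail S)) := fun j => hS j.succ.succ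
    have heq := (hmerged (hS 0) hR).trans (hmerged (hS 1) hR).symm
    rw [← cons_cons_tail_tail S, hf.apply_cons_cons_eq (hS 0) (hS 1) hR heq]
    exact hmerged (hS 0) hR

end StrategyProof

variable [Nontrivial α]

theorem dictatorialDomain_of_twoVoterRule (hrich : MinimallyRich D)
    (htwo : ∀ g, TwoVoterRule D g →
      (∀ P ∈ D, ∀ Q ∈ D, g P Q = peak P) ∨ ∀ P ∈ D, ∀ Q ∈ D, g P Q = peak Q) :
    DictatorialDomain D := by
  have dictatorship (k : ℕ) : ∀ f : (Fin (k + 1) → Pref α) → α,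
      IsRule D f → StrategyProof D f → Dictatorship D f := by
    induction k with
    | zero =>
      exact fun f hrule _ => ⟨0, fun P hP _ => hrule P hP _ fun i => by rw [Fin.fin_one_eq_zero i]⟩
    | succ k ih =>
      exact fun f hrule hsp =>
        hsp.dictatorship_of_mergeFirst hrich htwo (ih _ hrule.mergeFirst hsp.mergeFirst)
  intro n hn
  obtain ⟨k, rfl⟩ := Nat.exists_eq_add_of_le' (one_le_two.trans hn)
  exact dictatorship k

theorem secondsSet_nontrivial (hrich : MinimallyRich D) (h : ¬ UniqueSeconds D) (x : α) :
    (secondsSet D x).Nontrivial := by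
  obtain ⟨P, hP, hPpeak⟩ := hrich x
  refine Set.not_subsingleton_iff.1 fun hsub => h ⟨x, second P, ?_⟩
  exact hsub.eq_singleton_of_mem ⟨P, hP, hPpeak, rfl⟩

theorem dictatorialDomain_of_not_uniqueSeconds (hG : (adjGraph D).Connected)
    (hleaf : LeafSymmetry D) (h : ¬ UniqueSeconds D) : DictatorialDomain D :=
  have hrich := minimallyRich_of_connected hG
  dictatorialDomain_of_twoVoterRule hrich fun _ hg =>
    hg.dictatorial hG hleaf (secondsSet_nontrivial hrich h)

end ManyVoters

/-- on a non-dictatorial, unidimensional domain, there is no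
invariant, tops-only and strategy-proof two-voter rule iff the domain is a
semi-hybrid domain satisfying the unique seconds property. -/
theorem stmt3_no_invariant_iff_semihybrid (D : Set (Pref A)) (hD : D.Nonempty)
    (hcard : 3 ≤ Fintype.card A) (huni : Unidimensional D)
    (hnd : ¬ DictatorialDomain D)
    (Pl Pu : Pref A) (hPl : Pl ∈ D) (hPu : Pu ∈ D) (hrev : Reversed Pl Pu) :
    (¬ ∃ f : (Fin 2 → Pref A) → A,
        IsRule D f ∧ TopsOnly D f ∧ StrategyProof D f ∧ f ![Pl, Pu] = f ![Pu, Pl]) ↔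
    (SemiHybridDomain D ∧ UniqueSeconds D) := by
  obtain ⟨hG, -, hleaf⟩ := huni
  have : Nontrivial A := Fintype.one_lt_card_iff_nontrivial.1 (by omega)
  have hseconds : UniqueSeconds D := by
    by_contra hnot
    exact hnd (dictatorialDomain_of_not_uniqueSeconds hG hleaf hnot)
  rw [exists_invariant_iff hG hPl hPu hrev, ← semiHybridDomain_iff hG, and_iff_left hseconds]
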